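/- arXiv:2512.07106 — 2 statements merged into one kernel-verified Lean document; each statement's English description precedes it below -/
import Mathlib

section
/- Let K be a countably infinite field, let U be a countable K-vector space, and let ρ_U : K* → GL(U) be a diagonalizable representation all of whose weights are nonzero integers. Let Y be a set and let ψ : U → Y be a ρ_U-invariant function (ψ(ρ_U(a)u) = ψ(u) for all a ∈ K*, u ∈ U). Then for every subset E ⊆ U with positive upper Banach density (with respect to the additive group (U,+)) and every finite subset F ⊆ U, there exists u_F ∈ E such that ψ(F) ⊆ ψ(E − u_F). In particular, ψ(E − E) = ψ(U). -/
open Filter Topology Pointwise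
open scoped Classical

/-- A (additive) Følner sequence in a countable abelian group. -/
def IsAddFolner {A : Type*} [AddCommGroup A] (F : ℕ → Finset A) : Prop :=
  (∀ n, (F n).Nonempty) ∧
    ∀ a : A, Tendsto
      (fun n => ((F n ∩ (F n).image (· + a)).card : ℝ) / ((F n).card : ℝ)) atTop (𝓝 1)

/-- `E` has positive upper Banach density: some Følner sequence sees `E` with positive
upper density. -/
def PosUpperBanachDensity {A : Type*} [AddCommGroup A] (E : Set A) : Prop :=
  ∃ F : ℕ → Finset A, IsAddFolner F ∧
    0 < limsup (fun n => (((F n).filter (· ∈ E)).card : ℝ) / ((F n).card : ℝ)) atTop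

/-!
An invariant mean `N` on `U` that is positive on `B` turns `1_B - N(B)` into a positive definite
autocorrelation function `c` on `U`, and if no `u ∈ B` and `a ∈ Kˣ` had `u + a • f ∈ B`, then `c`
would equal `-N(B)²` on the whole orbit of `f`. So it suffices that the mean of `c` over the orbit
of `f` is nonnegative. Extracting roots in positive characteristic makes this mean a value of a
positive definite function `φ` on `K^S`, where `Kˣ` acts with distinct weights `l` that are nonzero
in `K`, and `φ` is invariant under this action.

Such a `φ` is nonnegative. By induction on the support of `x`, it is enough to show that `φ x` is
the mean of `φ` over the line through `x` in the direction of a coordinate `i₁` of extremal weight: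
this mean is positive definite and invariant, and does not depend on `x i₁`. Subtracting it, we may
assume that `φ` has mean zero over the line `K e_{i₁}`. Now `φ x` is the mean of
`b ↦ φ ((1 + b)^{±1} • x)`. In van der Corput's inequality the shifts are replaced by
reparametrizations `b ↦ μ ^ l i * b` followed by `μ ^ (-j)`, which fix the monomial `b ^ j` in the
coordinate `i`; differencing removes the monomials one at a time, until only the linear term in the
coordinate `i₁` is left, over which `φ` has mean zero.
-/

/-- Boundedness of a real function on a set without topology: the domain of definition of
a mean. -/
def IsBoundedFun {α : Type*} (f : α → ℝ) : Prop := ∃ C, ∀ x, |f x| ≤ C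

namespace IsBoundedFun

variable {α β ι : Type*} {f g : α → ℝ}

theorem const (c : ℝ) : IsBoundedFun fun _ : α => c := ⟨|c|, fun _ => le_rfl⟩

theorem add (hf : IsBoundedFun f) (hg : IsBoundedFun g) : IsBoundedFun fun x => f x + g x := by
  obtain ⟨C, hC⟩ := hf
  obtain ⟨D, hD⟩ := hg
  exact ⟨C + D, fun x => (abs_add_le _ _).trans (add_le_add (hC x) (hD x))⟩

theorem mul (hf : IsBoundedFun f) (hg : IsBoundedFun g) : IsBoundedFun fun x => f x * g x := by
  obtain ⟨C, hC⟩ := hf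
  obtain ⟨D, hD⟩ := hg
  exact ⟨C * D, fun x => (abs_mul _ _).trans_le
    (mul_le_mul (hC x) (hD x) (abs_nonneg _) ((abs_nonneg _).trans (hC x)))⟩

theorem const_mul (c : ℝ) (hf : IsBoundedFun f) : IsBoundedFun fun x => c * f x :=
  (const c).mul hf

theorem sub (hf : IsBoundedFun f) (hg : IsBoundedFun g) : IsBoundedFun fun x => f x - g x := by
  simpa only [neg_one_mul, ← sub_eq_add_neg] using hf.add (hg.const_mul (-1))

theorem comp (hf : IsBoundedFun f) (t : β → α) : IsBoundedFun fun x => f (t x) :=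
  hf.imp fun _ hC x => hC (t x)

theorem sum (s : Finset ι) {f : ι → α → ℝ} (hf : ∀ i, IsBoundedFun (f i)) :
    IsBoundedFun fun x => ∑ i ∈ s, f i x := by
  choose C hC using hf
  exact ⟨∑ i ∈ s, C i, fun x => (Finset.abs_sum_le_sum_abs _ _).trans
    (Finset.sum_le_sum fun i _ => hC i x)⟩

theorem indicator_one (E : Set α) : IsBoundedFun (E.indicator (1 : α → ℝ)) :=
  ⟨1, fun x => by by_cases hx : x ∈ E <;> simp [hx]⟩

end IsBoundedFun

theorem nonpos_of_forall_natCast_mul_le {x C : ℝ} (h : ∀ n : ℕ, n * x ≤ C) : x ≤ 0 := by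
  by_contra! hx
  obtain ⟨n, hn⟩ := exists_nat_gt (C / x)
  exact ((div_lt_iff₀ hx).1 hn).not_ge (h n)

/-- A finitely additive mean on `α`: a positive normalized linear functional on the bounded
real functions on `α`. Its values on unbounded functions are junk. -/
structure Mean (α : Type*) where
  /-- The value of the functional. -/
  toFun : (α → ℝ) → ℝ
  map_add : ∀ {f g : α → ℝ}, IsBoundedFun f → IsBoundedFun g →
    toFun (fun x => f x + g x) = toFun f + toFun g
  map_const_mul : ∀ (c : ℝ) {f : α → ℝ}, IsBoundedFun f → toFun (fun x => c * f x) = c * toFun f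
  map_const : ∀ c : ℝ, toFun (fun _ => c) = c
  map_nonneg : ∀ {f : α → ℝ}, IsBoundedFun f → (∀ x, 0 ≤ f x) → 0 ≤ toFun f

namespace Mean

instance {α : Type*} : CoeFun (Mean α) fun _ => (α → ℝ) → ℝ := ⟨toFun⟩

variable {α β ι : Type*} (M : Mean α)

theorem map_sub {f g : α → ℝ} (hf : IsBoundedFun f) (hg : IsBoundedFun g) :
    M (fun x => f x - g x) = M f - M g := by
  have h := M.map_add hf (hg.const_mul (-1))
  rw [M.map_const_mul _ hg] at h
  simpa only [neg_one_mul, ← sub_eq_add_neg] using h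

theorem map_mono {f g : α → ℝ} (hf : IsBoundedFun f) (hg : IsBoundedFun g) (h : ∀ x, f x ≤ g x) :
    M f ≤ M g := by
  rw [← sub_nonneg, ← M.map_sub hg hf]
  exact M.map_nonneg (hg.sub hf) fun x => sub_nonneg.2 (h x)

theorem map_le {f : α → ℝ} {C : ℝ} (hf : IsBoundedFun f) (h : ∀ x, f x ≤ C) : M f ≤ C :=
  (M.map_mono hf (.const C) h).trans_eq (M.map_const C)

theorem le_map {f : α → ℝ} {C : ℝ} (hf : IsBoundedFun f) (h : ∀ x, C ≤ f x) : C ≤ M f :=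
  (M.map_const C).ge.trans (M.map_mono (.const C) hf h)

theorem abs_map_le {f : α → ℝ} {C : ℝ} (h : ∀ x, |f x| ≤ C) : |M f| ≤ C :=
  abs_le.2 ⟨M.le_map ⟨C, h⟩ fun x => (abs_le.1 (h x)).1,
    M.map_le ⟨C, h⟩ fun x => (abs_le.1 (h x)).2⟩

theorem map_sum (s : Finset ι) {f : ι → α → ℝ} (hf : ∀ i, IsBoundedFun (f i)) :
    M (fun x => ∑ i ∈ s, f i x) = ∑ i ∈ s, M (f i) := by
  induction s using Finset.induction_on with
  | empty => exact M.map_const 0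
  | insert a s ha ih =>
    simp only [Finset.sum_insert ha]
    rw [M.map_add (hf a) (.sum s hf), ih]

theorem map_quadForm (s : Finset ι) (c : ι → ℝ) {f : ι → ι → α → ℝ}
    (hf : ∀ i j, IsBoundedFun (f i j)) :
    M (fun x => ∑ i ∈ s, ∑ j ∈ s, c i * c j * f i j x) =
      ∑ i ∈ s, ∑ j ∈ s, c i * c j * M (f i j) := by
  simp only [M.map_sum s fun i => IsBoundedFun.sum s fun j => (hf i j).const_mul (c i * c j),
    M.map_sum s fun j => (hf _ j).const_mul (c _ * c j), M.map_const_mul _ (hf _ _)]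

theorem isBoundedFun_apply (N : ι → Mean α) {f : α → ℝ} (hf : IsBoundedFun f) :
    IsBoundedFun fun i => N i f :=
  hf.imp fun _ hC i => (N i).abs_map_le hC

/-- The mixture of the means `N i` according to a mean `L` on the indices. -/
def bind (L : Mean ι) (N : ι → Mean α) : Mean α where
  toFun f := L fun i => N i f
  map_add hf hg := by
    simp only [(N _).map_add hf hg]
    exact L.map_add (isBoundedFun_apply N hf) (isBoundedFun_apply N hg)
  map_const_mul c f hf := by
    simp only [(N _).map_const_mul c hf]
    exact L.map_const_mul c (isBoundedFun_apply N hf)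
  map_const c := by simp only [(N _).map_const, L.map_const]
  map_nonneg hf h := L.map_nonneg (isBoundedFun_apply N hf) fun i => (N i).map_nonneg hf h

/-- The push-forward of a mean. -/
def map (t : α → β) : Mean β where
  toFun f := M fun x => f (t x)
  map_add hf hg := M.map_add (hf.comp t) (hg.comp t)
  map_const_mul c _ hf := M.map_const_mul c (hf.comp t)
  map_const c := M.map_const c
  map_nonneg hf h := M.map_nonneg (hf.comp t) fun x => h (t x)

/-- The average over a nonempty finite set. -/
noncomputable def avg (s : Finset α) (hs : s.Nonempty) : Mean α where
  toFun f := (∑ x ∈ s, f x) / s.card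
  map_add _ _ := by rw [Finset.sum_add_distrib, add_div]
  map_const_mul c f _ := by rw [← Finset.mul_sum, mul_div_assoc]
  map_const c := by
    rw [Finset.sum_const, nsmul_eq_mul, mul_div_cancel_left₀ _ (by simpa using hs.ne_empty)]
  map_nonneg _ h := div_nonneg (Finset.sum_nonneg fun x _ => h x) (Nat.cast_nonneg _)

theorem tendsto_limUnder_of_isBoundedFun (𝒰 : Ultrafilter α) {f : α → ℝ} (hf : IsBoundedFun f) :
    Tendsto f 𝒰 (𝓝 (limUnder (𝒰 : Filter α) f)) := by
  obtain ⟨C, hC⟩ := hf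
  obtain ⟨x, -, hx⟩ := (isCompact_Icc (a := -C) (b := C)).ultrafilter_le_nhds (𝒰.map f)
    (tendsto_principal.2 (.of_forall fun i => abs_le.1 (hC i)))
  exact tendsto_nhds_limUnder ⟨x, hx⟩

/-- The limit along an ultrafilter. -/
noncomputable def ultra (𝒰 : Ultrafilter α) : Mean α where
  toFun f := limUnder (𝒰 : Filter α) f
  map_add hf hg := ((tendsto_limUnder_of_isBoundedFun 𝒰 hf).add
    (tendsto_limUnder_of_isBoundedFun 𝒰 hg)).limUnder_eq
  map_const_mul c _ hf := ((tendsto_limUnder_of_isBoundedFun 𝒰 hf).const_mul c).limUnder_eq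
  map_const c := (tendsto_const_nhds (x := c) (f := (𝒰 : Filter α))).limUnder_eq
  map_nonneg hf h := ge_of_tendsto' (tendsto_limUnder_of_isBoundedFun 𝒰 hf) h

theorem tendsto_ultra (𝒰 : Ultrafilter α) {f : α → ℝ} (hf : IsBoundedFun f) :
    Tendsto f 𝒰 (𝓝 (ultra 𝒰 f)) :=
  tendsto_limUnder_of_isBoundedFun 𝒰 hf

/-- Invariance of a mean under a self-map. -/
def IsInvariant (M : Mean α) (t : α → α) : Prop :=
  ∀ f : α → ℝ, IsBoundedFun f → M (fun x => f (t x)) = M f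

theorem isInvariant_ultra_bind {𝒰 : Ultrafilter ι} {N : ι → Mean α} {t : α → α}
    (h : ∀ f : α → ℝ, IsBoundedFun f →
      Tendsto (fun i => N i (fun x => f (t x)) - N i f) 𝒰 (𝓝 0)) :
    ((ultra 𝒰).bind N).IsInvariant t := fun f hf => by
  have hlim := (tendsto_ultra 𝒰 (isBoundedFun_apply N (hf.comp t))).sub
    (tendsto_ultra 𝒰 (isBoundedFun_apply N hf))
  exact sub_eq_zero.1 (tendsto_nhds_unique hlim (h f hf))

theorem IsInvariant.bind {L : Mean ι} {N : ι → Mean α} {t : α → α}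
    (hN : ∀ i, (N i).IsInvariant t) : (L.bind N).IsInvariant t := fun f hf =>
  congrArg L (funext fun i => hN i f hf)

theorem IsInvariant.map {M : Mean α} {s t : α → α} (hs : M.IsInvariant s)
    (hst : Function.Commute s t) : (M.map t).IsInvariant s := fun f hf =>
  (congrArg M (funext fun x => congrArg f (hst x))).trans (hs _ (hf.comp t))

/-- The average of the push-forwards of `M` under the first `n + 1` iterates of `t`. -/
noncomputable def cesaro (t : α → α) (n : ℕ) : Mean α :=
  (avg (Finset.range (n + 1)) Finset.nonempty_range_add_one).bind fun k => M.map t^[k]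

theorem tendsto_cesaro_comp_sub (t : α → α) {f : α → ℝ} (hf : IsBoundedFun f) :
    Tendsto (fun n => M.cesaro t n (fun x => f (t x)) - M.cesaro t n f) atTop (𝓝 0) := by
  obtain ⟨C, hC⟩ := hf
  have htelescope (n : ℕ) : M.cesaro t n (fun x => f (t x)) - M.cesaro t n f =
      (M (fun x => f (t^[n + 1] x)) - M f) / (n + 1) := by
    simp only [cesaro, bind, avg, map, ← sub_div, ← Finset.sum_sub_distrib,
      ← Function.iterate_succ_apply', Finset.card_range, Nat.cast_add_one]
    rw [Finset.sum_range_sub fun k => M fun x => f (t^[k] x)]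
    rfl
  have hbound (n : ℕ) : |M (fun x => f (t^[n + 1] x)) - M f| ≤ C + C :=
    (abs_sub _ _).trans (add_le_add (M.abs_map_le fun x => hC _) (M.abs_map_le hC))
  simp only [htelescope]
  exact tendsto_bdd_div_atTop_nhds_zero (b := -(C + C)) (B := C + C)
    (.of_forall fun n => (abs_le.1 (hbound n)).1) (.of_forall fun n => (abs_le.1 (hbound n)).2)
    (tendsto_natCast_atTop_atTop.atTop_add tendsto_const_nhds)

theorem exists_isInvariant_and_of_commute (t : α → α) :
    ∃ N : Mean α, N.IsInvariant t ∧
      ∀ s : α → α, Function.Commute s t → M.IsInvariant s → N.IsInvariant s :=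
  ⟨(ultra (Ultrafilter.of atTop)).bind (M.cesaro t),
    isInvariant_ultra_bind fun _ hf =>
      (M.tendsto_cesaro_comp_sub t hf).mono_left (Ultrafilter.of_le _),
    fun _ hst hs => .bind fun _ => .bind fun k => hs.map (hst.iterate_right k)⟩

theorem exists_isInvariant_of_commute [Nonempty α] (T : ι → α → α)
    (hT : ∀ i j, Function.Commute (T i) (T j)) : ∃ N : Mean α, ∀ i, N.IsInvariant (T i) := by
  have hfin (F : Finset ι) : ∃ N : Mean α, ∀ i ∈ F, N.IsInvariant (T i) := by
    induction F using Finset.induction_on with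
    | empty => exact ⟨avg {Classical.arbitrary α} (Finset.singleton_nonempty _), by simp⟩
    | insert a F _ ih =>
      obtain ⟨N, hN⟩ := ih
      obtain ⟨N', ha', hN'⟩ := N.exists_isInvariant_and_of_commute (T a)
      exact ⟨N', (Finset.forall_mem_insert _ _ _).2 ⟨ha', fun i hi => hN' _ (hT i a) (hN i hi)⟩⟩
  choose N hN using hfin
  refine ⟨(ultra (Ultrafilter.of atTop)).bind N, fun i => isInvariant_ultra_bind fun f hf => ?_⟩
  refine (tendsto_const_nhds.congr' ?_).mono_left (Ultrafilter.of_le atTop)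
  filter_upwards [eventually_ge_atTop {i}] with F hF
  rw [hN F i (Finset.singleton_subset_iff.1 hF) f hf, sub_self]

/-- The finitely additive probability measure attached to a mean. -/
noncomputable def measure (E : Set α) : ℝ := M (E.indicator 1)

theorem measure_avg {s : Finset α} (hs : s.Nonempty) (E : Set α) :
    (avg s hs).measure E = (s.filter (· ∈ E)).card / s.card := by
  simp [measure, avg, Set.indicator_apply]

theorem exists_mem_forall_notMem {E : Set α} (hE : 0 < M.measure E) (F : Finset ι) {B : ι → Set α}
    (hB : ∀ i ∈ F, M.measure (B i) ≤ 0) : ∃ x ∈ E, ∀ i ∈ F, x ∉ B i := by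
  by_contra! hcover
  have hle (x : α) : E.indicator 1 x ≤ ∑ i ∈ F, (B i).indicator (1 : α → ℝ) x := by
    have hnonneg : ∀ i ∈ F, 0 ≤ (B i).indicator (1 : α → ℝ) x :=
      fun i _ => Set.indicator_nonneg (fun _ _ => zero_le_one) x
    refine Set.indicator_apply_le' (fun hx => ?_) fun _ => Finset.sum_nonneg hnonneg
    obtain ⟨i, hi, hxi⟩ := hcover x hx
    exact (Set.indicator_of_mem hxi 1).ge.trans (Finset.single_le_sum hnonneg hi)
  have := M.map_mono (.indicator_one E) (.sum F fun i => .indicator_one (B i)) hle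
  rw [M.map_sum F fun i => .indicator_one (B i)] at this
  exact (hE.trans_le this).not_ge (Finset.sum_nonpos hB)

section Translation

variable {G : Type*} [AddCommGroup G] [Infinite G] {M : Mean G}

theorem measure_singleton (hM : ∀ a, M.IsInvariant (· + a)) (p : G) : M.measure {p} = 0 := by
  have hconst (q : G) : M.measure {q} = M.measure {p} := by
    refine Eq.trans (congrArg M (funext fun x => ?_)) (hM (p - q) _ (.indicator_one {p}))
    simp only [Set.indicator_apply, Set.mem_singleton_iff, add_sub_left_comm x, add_eq_left,
      sub_eq_zero, Pi.one_apply]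
  refine le_antisymm (nonpos_of_forall_natCast_mul_le (C := 1) fun n => ?_)
    (M.map_nonneg (.indicator_one _) fun x => Set.indicator_nonneg (fun _ _ => zero_le_one) x)
  obtain ⟨s, rfl⟩ := Infinite.exists_subset_card_eq G n
  calc s.card * M.measure {p} = ∑ q ∈ s, M.measure {q} := by simp only [hconst,
        Finset.sum_const, nsmul_eq_mul]
    _ = M fun x => ∑ q ∈ s, ({q} : Set G).indicator 1 x :=
        (M.map_sum s fun q => .indicator_one {q}).symm
    _ ≤ 1 := M.map_le (.sum s fun q => .indicator_one {q}) fun x => by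
        simp only [Set.indicator_apply, Set.mem_singleton_iff, Pi.one_apply, Finset.sum_ite_eq]
        split_ifs <;> simp

theorem map_congr_cofinite (hM : ∀ a, M.IsInvariant (· + a)) {f g : G → ℝ}
    (hf : IsBoundedFun f) (hg : IsBoundedFun g) (hfg : ∀ᶠ x in cofinite, f x = g x) :
    M f = M g := by
  have hfin : {x | ¬ f x = g x}.Finite := hfg
  have hsum : (fun x => f x - g x) =
      fun x => ∑ p ∈ hfin.toFinset, (f p - g p) * ({p} : Set G).indicator 1 x := by
    funext x
    simp only [Set.indicator_apply, Set.mem_singleton_iff, Pi.one_apply, mul_ite, mul_one, mul_zero,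
      Finset.sum_ite_eq, Set.Finite.mem_toFinset, Set.mem_ofPred_eq, ite_not]
    split_ifs with hx
    exacts [sub_eq_zero.2 hx, rfl]
  rw [← sub_eq_zero, ← M.map_sub hf hg, hsum,
    M.map_sum _ fun p => (IsBoundedFun.indicator_one {p}).const_mul _]
  refine Finset.sum_eq_zero fun p _ => ?_
  rw [M.map_const_mul _ (.indicator_one _)]
  exact mul_eq_zero_of_right _ (measure_singleton hM p)

end Translation

/-- Invariance of a mean on a field under the affine group of the field. -/
structure IsAffineInvariant {K : Type*} [Field K] (M : Mean K) : Prop where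
  add_right : ∀ a : K, M.IsInvariant (· + a)
  mul_left : ∀ a : K, a ≠ 0 → M.IsInvariant (a * ·)

theorem exists_isInvariant_mul_left (G : Type*) [CommGroup G] :
    ∃ M : Mean G, ∀ a : G, M.IsInvariant (a * ·) :=
  exists_isInvariant_of_commute (fun a x : G => a * x) fun a b x => mul_left_comm a b x

theorem exists_isAffineInvariant (K : Type*) [Field K] : ∃ M : Mean K, M.IsAffineInvariant := by
  obtain ⟨N, hN⟩ := exists_isInvariant_of_commute (fun a x : K => x + a)
    fun a b x => add_right_comm x b a
  obtain ⟨L, hL⟩ := exists_isInvariant_mul_left Kˣ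
  refine ⟨L.bind fun a => N.map (a.val * ·), fun t => .bind fun a f hf => ?_, fun c hc f hf => ?_⟩
  · simpa [map, mul_add] using hN ((a : K)⁻¹ * t) _ (hf.comp (a.val * ·))
  · have h := hL (Units.mk0 c hc) _ (isBoundedFun_apply (fun a : Kˣ => N.map (a.val * ·)) hf)
    simpa [map, bind, mul_assoc] using h

/-- The mean of `φ` over the line through `x` with direction `t`. -/
def lineMean {K G : Type*} [Field K] [AddCommGroup G] (M : Mean K) (t : K →+ G) (φ : G → ℝ)
    (x : G) : ℝ :=
  M fun b => φ (x + t b)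

end Mean

/-- A real positive definite function on an additive group: the kernel `φ (x - y)` is a
positive semidefinite matrix. -/
def IsPosDef {G : Type*} [AddCommGroup G] (φ : G → ℝ) : Prop :=
  (Matrix.of fun x y : G => φ (x - y)).PosSemidef

namespace IsPosDef

variable {G H α ι : Type*} [AddCommGroup G] [AddCommGroup H] {φ : G → ℝ}

theorem of_quadForm_nonneg (hneg : ∀ x, φ (-x) = φ x)
    (hquad : ∀ (s : Finset G) (c : G → ℝ), 0 ≤ ∑ x ∈ s, ∑ y ∈ s, c x * c y * φ (x - y)) :
    IsPosDef φ := by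
  refine ⟨Matrix.IsHermitian.ext fun x y => ?_, fun c => ?_⟩
  · rw [Matrix.of_apply, Matrix.of_apply, star_trivial, ← hneg, neg_sub]
  · simpa only [Finsupp.sum, Matrix.of_apply, star_trivial, mul_right_comm] using
      hquad c.support c

theorem quadForm_nonneg (h : IsPosDef φ) (s : Finset ι) (c : ι → ℝ) (x : ι → G) :
    0 ≤ ∑ i ∈ s, ∑ j ∈ s, c i * c j * φ (x i - x j) := by
  have := (Matrix.PosSemidef.submatrix h fun i : s => x i).dotProduct_mulVec_nonneg fun i => c i
  simpa only [← Finset.sum_coe_sort s, dotProduct, Matrix.mulVec, Matrix.submatrix_apply,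
    Matrix.of_apply, star_trivial, Finset.mul_sum, mul_assoc, mul_comm (φ _)] using this

theorem apply_neg (h : IsPosDef φ) (x : G) : φ (-x) = φ x := by
  simpa using h.1.apply x 0

theorem abs_apply_le (h : IsPosDef φ) (x : G) : |φ x| ≤ φ 0 := by
  have hform (e : ℝ) : 0 ≤ φ 0 + 2 * e * φ x + e ^ 2 * φ 0 := by
    have := h.quadForm_nonneg Finset.univ ![1, e] ![x, 0]
    simp only [Fin.sum_univ_two, Matrix.cons_val_zero, Matrix.cons_val_one, sub_self, sub_zero,
      zero_sub, h.apply_neg] at this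
    linarith
  exact abs_le.2 ⟨by linarith [hform 1], by linarith [hform (-1)]⟩

theorem isBoundedFun (h : IsPosDef φ) : IsBoundedFun φ := ⟨φ 0, h.abs_apply_le⟩

theorem mean_quadForm_nonneg (h : IsPosDef φ) (M : Mean α) (s : Finset ι) (c : ι → ℝ)
    (x : ι → α → G) :
    0 ≤ ∑ i ∈ s, ∑ j ∈ s, c i * c j * M fun a => φ (x i a - x j a) := by
  have hb (i j : ι) : IsBoundedFun fun a => φ (x i a - x j a) := h.isBoundedFun.comp _
  rw [← M.map_quadForm s c hb]
  exact M.map_nonneg (.sum s fun i => .sum s fun j => (hb i j).const_mul _) fun a =>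
    h.quadForm_nonneg s c fun i => x i a

theorem mean_comp (h : IsPosDef φ) (M : Mean α) (T : α → H →+ G) :
    IsPosDef fun x => M fun a => φ (T a x) :=
  of_quadForm_nonneg (fun x => by simp only [map_neg, h.apply_neg]) fun s c => by
    simpa only [map_sub] using h.mean_quadForm_nonneg M s c fun x a => T a x

/-- Bessel's inequality for the averaged kernel, with respect to which the curves `Q k` are
orthogonal. -/
theorem natCast_mul_sq_mean_le (h : IsPosDef φ) {M : Mean α} {Q : ℕ → α → G} {A : ℝ}
    (hQ : ∀ k, M (fun a => φ (Q k a)) = A)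
    (hQQ : ∀ k k', k ≠ k' → M (fun a => φ (Q k a - Q k' a)) = 0) (n : ℕ) :
    n * A ^ 2 ≤ φ 0 ^ 2 := by
  have hoff (k k' : ℕ) : M (fun a => φ (Q k a - Q k' a)) = if k = k' then φ 0 else 0 := by
    split_ifs with hkk
    · simp only [hkk, sub_self, M.map_const]
    · exact hQQ k k' hkk
  have hform (y : ℝ) : 0 ≤ n * φ 0 * (y * y) + 2 * n * A * y + φ 0 := by
    have := h.mean_quadForm_nonneg M (Finset.insertNone (Finset.range n))
      (fun o => o.elim 1 fun _ => y) (fun o a => o.elim 0 fun k => Q k a)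
    simp only [Finset.sum_insertNone, Option.elim_none, Option.elim_some, sub_zero, zero_sub,
      h.apply_neg, hQ, M.map_const, one_mul, mul_one, Finset.sum_add_distrib, hoff, mul_ite,
      mul_zero, Finset.sum_ite_eq, Finset.sum_ite_mem, Finset.inter_self, Finset.sum_const,
      nsmul_eq_mul, Finset.card_range] at this
    linarith
  rcases n.eq_zero_or_pos with rfl | hn
  · simpa using sq_nonneg (φ 0)
  have hdiscrim := discrim_le_zero hform
  refine le_of_mul_le_mul_left (a := 4 * (n : ℝ)) ?_ (by positivity)
  rw [discrim] at hdiscrim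
  linarith

theorem mean_eq_zero_of_pairwise (h : IsPosDef φ) {M : Mean α} {Q : ℕ → α → G} {A : ℝ}
    (hQ : ∀ k, M (fun a => φ (Q k a)) = A)
    (hQQ : ∀ k k', k ≠ k' → M (fun a => φ (Q k a - Q k' a)) = 0) : A = 0 :=
  pow_eq_zero_iff two_ne_zero |>.1 <| le_antisymm
    (nonpos_of_forall_natCast_mul_le (h.natCast_mul_sq_mean_le hQ hQQ)) (sq_nonneg A)

theorem mean_nonneg {K : Type*} [Field K] [Infinite K] {M : Mean K} (hM : M.IsAffineInvariant)
    {g : K → ℝ} (hg : IsPosDef g) : 0 ≤ M g := by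
  have hoff (i j : K) : M (fun b => g (i * b - j * b)) = M g + if i = j then g 0 - M g else 0 := by
    simp only [← sub_mul]
    split_ifs with hij
    · simp [hij, M.map_const]
    · rw [hM.mul_left _ (sub_ne_zero.2 hij) g hg.isBoundedFun, add_zero]
  refine neg_nonpos.1 (nonpos_of_forall_natCast_mul_le (C := g 0) fun n => ?_)
  obtain ⟨s, hs⟩ := Infinite.exists_subset_card_eq K (n + 1)
  have hform := hg.mean_quadForm_nonneg M s (fun _ => 1) fun i b => i * b
  simp only [hoff, one_mul, Finset.sum_add_distrib, Finset.sum_const, Finset.sum_ite_eq,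
    Finset.sum_ite_mem, Finset.inter_self, hs, nsmul_eq_mul, ← mul_add] at hform
  have := nonneg_of_mul_nonneg_right hform (by positivity)
  push_cast at this
  linarith

theorem autocorrelation {N : Mean G} (hN : ∀ a, N.IsInvariant (· + a)) {f : G → ℝ}
    (hf : IsBoundedFun f) : IsPosDef fun u => N fun x => f x * f (x + u) := by
  have hbdd (u v : G) : IsBoundedFun fun z => f (z + u) * f (z + v) :=
    (hf.comp (· + u)).mul (hf.comp (· + v))
  have hshift (u v : G) : N (fun z => f (z + u) * f (z + v)) =
      N fun z => f z * f (z + (v - u)) := by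
    simpa [add_assoc] using hN u _ (hf.mul (hf.comp (· + (v - u))))
  refine of_quadForm_nonneg (fun u => ?_) fun s c => ?_
  · simpa only [add_zero, zero_sub, mul_comm (f (_ + u))] using (hshift u 0).symm
  · simp only [← hshift]
    rw [← N.map_quadForm s c fun u v => hbdd v u]
    refine N.map_nonneg (.sum s fun u => .sum s fun v => (hbdd v u).const_mul _) fun z => ?_
    refine (sq_nonneg (∑ u ∈ s, c u * f (z + u))).trans_eq ?_
    rw [sq, Finset.sum_mul_sum]
    exact Finset.sum_congr rfl fun u _ => Finset.sum_congr rfl fun v _ => by ring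

section lineMean

variable {K : Type*} [Field K] {M : Mean K}

theorem line (h : IsPosDef φ) (t : K →+ G) (s : Finset ι) (c : ι → ℝ) (x : ι → G) :
    IsPosDef fun b => ∑ i ∈ s, ∑ j ∈ s, c i * c j * φ (x i - x j + t b) := by
  refine of_quadForm_nonneg (fun b => ?_) fun S d => ?_
  · rw [Finset.sum_comm]
    refine Finset.sum_congr rfl fun i _ => Finset.sum_congr rfl fun j _ => ?_
    rw [mul_comm (c j), ← h.apply_neg, map_neg, neg_add, neg_sub, neg_neg]
  · refine (h.quadForm_nonneg (S ×ˢ s) (fun q => d q.1 * c q.2) fun q => x q.2 + t q.1).trans_eq ?_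
    simp only [Finset.sum_product, Finset.mul_sum, map_sub, add_sub_add_comm]
    refine Finset.sum_congr rfl fun b _ => Finset.sum_comm.trans ?_
    refine Finset.sum_congr rfl fun b' _ => Finset.sum_congr rfl fun i _ =>
      Finset.sum_congr rfl fun j _ => by ring

theorem isBoundedFun_line (h : IsPosDef φ) (t : K →+ G) (x : G) :
    IsBoundedFun fun b => φ (x + t b) :=
  h.isBoundedFun.comp _

theorem mean_line (h : IsPosDef φ) (t : K →+ G) (s : Finset ι) (c : ι → ℝ) (x : ι → G) :
    M (fun b => ∑ i ∈ s, ∑ j ∈ s, c i * c j * φ (x i - x j + t b)) =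
      ∑ i ∈ s, ∑ j ∈ s, c i * c j * M.lineMean t φ (x i - x j) :=
  M.map_quadForm s c fun _ _ => h.isBoundedFun_line t _

theorem lineMean_neg (h : IsPosDef φ) (hM : M.IsAffineInvariant) (t : K →+ G) (x : G) :
    M.lineMean t φ (-x) = M.lineMean t φ x := by
  refine (hM.mul_left (-1) (neg_ne_zero.2 one_ne_zero) _ (h.isBoundedFun_line t (-x))).symm.trans ?_
  refine congrArg M (funext fun b => ?_)
  rw [← h.apply_neg]
  simp only [neg_one_mul, map_neg, neg_add, neg_neg]

theorem isPosDef_lineMean [Infinite K] (h : IsPosDef φ) (hM : M.IsAffineInvariant) (t : K →+ G) :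
    IsPosDef (M.lineMean t φ) :=
  of_quadForm_nonneg (h.lineMean_neg hM t) fun s c => by
    simpa only [← h.mean_line] using mean_nonneg hM (h.line t s c fun y => y)

theorem isPosDef_sub_lineMean (h : IsPosDef φ) (hM : M.IsAffineInvariant) (t : K →+ G) :
    IsPosDef fun x => φ x - M.lineMean t φ x := by
  refine of_quadForm_nonneg (fun x => by rw [h.apply_neg, h.lineMean_neg hM]) fun s c => ?_
  have hline := h.line t s c fun y => y
  have hle := M.map_le hline.isBoundedFun fun b => (le_abs_self _).trans (hline.abs_apply_le b)
  simp only [h.mean_line, map_zero, add_zero] at hle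
  simpa only [mul_sub, Finset.sum_sub_distrib, sub_nonneg] using hle

theorem lineMean_add (h : IsPosDef φ) (hM : M.IsAffineInvariant) (t : K →+ G) (x : G) (a : K) :
    M.lineMean t φ (x + t a) = M.lineMean t φ x := by
  refine Eq.trans (congrArg M (funext fun b => ?_))
    (hM.add_right a _ (h.isBoundedFun_line t x))
  rw [map_add, add_assoc, add_comm (t a)]

end lineMean

end IsPosDef

theorem exists_injective_zpow (K : Type*) [Field K] [Infinite K] {e : ℤ} (he : e ≠ 0) :
    ∃ μ : ℕ → Kˣ, Function.Injective fun k => μ k ^ e := by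
  have hunits : Infinite Kˣ :=
    unitsEquivNeZero.infinite_iff.2 (Set.finite_singleton (0 : K)).infinite_compl.to_subtype
  have : NeZero e.natAbs := ⟨Int.natAbs_ne_zero.2 he⟩
  have hker : Finite (zpowGroupHom e : Kˣ →* Kˣ).ker := by
    rw [ker_zpowGroupHom_eq_rootsOfUnity]
    infer_instance
  have hrange : Infinite (zpowGroupHom e : Kˣ →* Kˣ).range :=
    not_finite_iff_infinite.1 fun hfin => hunits.not_finite <|
      (MonoidHom.finite_iff_finite_ker_range _).2 ⟨hker, hfin⟩
  let y : ℕ ↪ (zpowGroupHom e : Kˣ →* Kˣ).range := Infinite.natEmbedding _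
  choose μ hμ using fun k => (y k).2
  exact ⟨μ, fun k k' hkk => y.injective (Subtype.ext ((hμ k).symm.trans (hkk.trans (hμ k'))))⟩

section Weights

variable {K ι : Type*} [Field K]

/-- The action of `a` on a coordinate space on which the torus acts with weights `l`. -/
def weightMap (l : ι → ℤ) (a : Kˣ) : (ι → K) →+ (ι → K) where
  toFun x i := (a ^ l i : Kˣ) * x i
  map_zero' := funext fun _ => mul_zero _
  map_add' _ _ := funext fun _ => mul_add _ _ _

@[simp]
theorem weightMap_apply (l : ι → ℤ) (a : Kˣ) (x : ι → K) (i : ι) :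
    weightMap l a x i = (a ^ l i : Kˣ) * x i := rfl

theorem weightMap_neg (l : ι → ℤ) (a : Kˣ) : weightMap (-l) a = weightMap l a⁻¹ := by
  ext x i
  simp

/-- Invariance of a function on a coordinate space under the torus action with weights `l`. -/
def IsWeightInvariant (l : ι → ℤ) (φ : (ι → K) → ℝ) : Prop :=
  ∀ a x, φ (weightMap l a x) = φ x

theorem IsWeightInvariant.neg {l : ι → ℤ} {φ : (ι → K) → ℝ} (h : IsWeightInvariant l φ) :
    IsWeightInvariant (-l) φ := fun a x => by
  rw [weightMap_neg, h]

/-- Reparametrization of a curve `R` in a coordinate space, up to the torus action: the means of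
an invariant function along `R` and along `twist l i j μ R` agree, and the twist is normalized
to fix the curve with the single coordinate `b ^ j` at `i`. -/
def twist (l : ι → ℤ) (i : ι) (j : ℕ) (μ : Kˣ) (R : K → ι → K) (b : K) : ι → K :=
  weightMap l (μ ^ (-(j : ℤ))) (R ((μ ^ l i : Kˣ) * b))

theorem twist_add (l : ι → ℤ) (i : ι) (j : ℕ) (μ : Kˣ) (R S : K → ι → K) :
    twist l i j μ (R + S) = twist l i j μ R + twist l i j μ S :=
  funext fun _ => map_add _ _ _

theorem twist_apply (l : ι → ℤ) (i : ι) (j : ℕ) (μ : Kˣ) (R : K → ι → K) (b : K) (i' : ι) :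
    twist l i j μ R b i' = (μ ^ (-j * l i') : Kˣ) * R ((μ ^ l i : Kˣ) * b) i' := by
  rw [twist, weightMap_apply, zpow_mul]

theorem mean_twist {M : Mean K} (hM : M.IsAffineInvariant) {φ : (ι → K) → ℝ}
    (hbdd : IsBoundedFun φ) {l : ι → ℤ} (hφ : IsWeightInvariant l φ) (i : ι) (j : ℕ) (μ : Kˣ)
    (R : K → ι → K) : M (fun b => φ (twist l i j μ R b)) = M fun b => φ (R b) :=
  (congrArg M (funext fun _ => hφ _ _)).trans
    (hM.mul_left _ (Units.ne_zero _) _ (hbdd.comp R))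

open Polynomial

/-- The curve in a coordinate space with polynomial coordinates `p`. -/
noncomputable def polyCurve (p : ι → K[X]) (b : K) (i : ι) : K := (p i).eval b

theorem polyCurve_zero : polyCurve (0 : ι → K[X]) = 0 :=
  funext₂ fun _ _ => eval_zero

theorem polyCurve_sub (p q : ι → K[X]) : polyCurve (p - q) = polyCurve p - polyCurve q :=
  funext₂ fun _ _ => eval_sub _ _ _

/-- The polynomial coordinates of the twist of a polynomial curve. -/
noncomputable def polyTwist (l : ι → ℤ) (i : ι) (j : ℕ) (μ : Kˣ) (p : ι → K[X]) (i' : ι) : K[X] :=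
  C ((μ ^ (-j * l i') : Kˣ) : K) * (p i').comp (C ((μ ^ l i : Kˣ) : K) * X)

theorem twist_polyCurve (l : ι → ℤ) (i : ι) (j : ℕ) (μ : Kˣ) (p : ι → K[X]) :
    twist l i j μ (polyCurve p) = polyCurve (polyTwist l i j μ p) := by
  funext b i'
  simp [twist_apply, polyCurve, polyTwist]

theorem coeff_polyTwist (l : ι → ℤ) (i : ι) (j : ℕ) (μ : Kˣ) (p : ι → K[X]) (i' : ι) (j' : ℕ) :
    (polyTwist l i j μ p i').coeff j' = (μ ^ (l i * j' - j * l i') : Kˣ) * (p i').coeff j' := by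
  rw [polyTwist, coeff_C_mul, comp_C_mul_X_coeff, sub_eq_neg_add, zpow_add, zpow_mul μ (l i),
    zpow_natCast, neg_mul]
  push_cast
  ring

/-- Subtracting two twists that fix the monomial `b ^ j` in the coordinate `i` removes this
monomial, so van der Corput's inequality kills the monomials of `p` one at a time. -/
theorem mean_comp_polyCurve_add_eq_zero [Infinite K] {M : Mean K} (hM : M.IsAffineInvariant)
    {φ : (ι → K) → ℝ} (h : IsPosDef φ) {l : ι → ℤ} (hφ : IsWeightInvariant l φ) (i₁ : ι)
    {𝓡 : Set (K → ι → K)} (h𝓡 : ∀ R ∈ 𝓡, M (fun b => φ (R b)) = 0) (J : Finset (ι × ℕ))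
    (htwist : ∀ R ∈ 𝓡, ∀ q ∈ J, ∀ μ μ' : Kˣ,
      μ ^ (l q.1 - q.2 * l i₁) ≠ μ' ^ (l q.1 - q.2 * l i₁) →
        twist l q.1 q.2 μ R - twist l q.1 q.2 μ' R ∈ 𝓡)
    (hJ : ∀ q ∈ J, l q.1 ≠ q.2 * l i₁) (p : ι → K[X])
    (hp : ∀ i j, (p i).coeff j ≠ 0 → (i, j) ∈ J) {R : K → ι → K} (hR : R ∈ 𝓡) :
    M (fun b => φ ((polyCurve p + R) b)) = 0 := by
  induction J using Finset.induction_on generalizing p R with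
  | empty =>
    have hp0 : p = 0 := funext fun i => Polynomial.ext fun j =>
      not_not.1 fun hne => Finset.notMem_empty _ (hp i j hne)
    simpa only [hp0, polyCurve_zero, zero_add] using h𝓡 R hR
  | insert q J hq ih =>
    obtain ⟨i, j⟩ := q
    have hgap := sub_ne_zero.2 (hJ _ (Finset.mem_insert_self _ _))
    obtain ⟨μ, hμ⟩ := exists_injective_zpow K hgap
    refine h.mean_eq_zero_of_pairwise (Q := fun k => twist l i j (μ k) (polyCurve p + R))
      (fun k => mean_twist hM h.isBoundedFun hφ i j (μ k) _) fun k k' hkk => ?_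
    have hdiff := ih (fun S hS q hq => htwist S hS q (Finset.mem_insert_of_mem hq))
      (fun q hq => hJ q (Finset.mem_insert_of_mem hq))
      (polyTwist l i j (μ k) p - polyTwist l i j (μ k') p) (fun i' j' hne => ?_)
      (htwist R hR _ (Finset.mem_insert_self _ _) (μ k) (μ k') (hμ.ne hkk))
    · simpa only [polyCurve_sub, ← twist_polyCurve, sub_add_sub_comm, ← twist_add,
        Pi.sub_apply] using hdiff
    · rw [Pi.sub_apply, coeff_sub, coeff_polyTwist, coeff_polyTwist] at hne
      have hmem := hp i' j' fun h0 => hne (by rw [h0, mul_zero, mul_zero, sub_zero])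
      refine Finset.mem_of_mem_insert_of_ne hmem fun heq => hne ?_
      obtain ⟨rfl, rfl⟩ := Prod.mk.inj heq
      simp [mul_comm (l i')]

theorem exists_finset_coeff_ne_zero [Finite ι] (p : ι → K[X]) :
    ∃ J : Finset (ι × ℕ), ∀ i j, (i, j) ∈ J ↔ (p i).coeff j ≠ 0 :=
  have := Fintype.ofFinite ι
  ⟨Finset.univ.biUnion fun i => (p i).support.image (Prod.mk i), by simp⟩

theorem eventually_cofinite_one_add_ne_zero (K : Type*) [Field K] :
    ∀ᶠ b : K in cofinite, 1 + b ≠ 0 := by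
  filter_upwards [(Set.finite_singleton (-1 : K)).eventually_cofinite_notMem] with b hb h0
  exact hb (eq_neg_of_add_eq_zero_right h0)

theorem mean_eq_of_eventually_eq_weightMap [Infinite K] {M : Mean K} (hM : M.IsAffineInvariant)
    {φ : (ι → K) → ℝ} (hbdd : IsBoundedFun φ) {l : ι → ℤ} (hφ : IsWeightInvariant l φ)
    {x : ι → K} {R : K → ι → K}
    (hR : ∀ᶠ b in cofinite, ∃ a : Kˣ, R b = weightMap l a x) :
    M (fun b => φ (R b)) = φ x := by
  refine (M.map_congr_cofinite hM.add_right (hbdd.comp R) (.const (φ x)) ?_).trans (M.map_const _)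
  filter_upwards [hR] with b ⟨a, ha⟩
  rw [ha, hφ]

theorem coe_mk0_zpow {c : K} (hc : c ≠ 0) {n : ℤ} (hn : 0 ≤ n) :
    ((Units.mk0 c hc ^ n : Kˣ) : K) = c ^ n.toNat := by
  rw [Units.val_zpow_eq_zpow_val, Units.val_mk0, ← zpow_natCast, Int.toNat_of_nonneg hn]

/-- The non-linear part of the orbit `b ↦ (1 + b) • x` when the weights on the support of `x` are
positive: only the linear term in the coordinate `i₁` is subtracted. -/
noncomputable def orbitPoly (l : ι → ℤ) (i₁ : ι) (x : ι → K) (i : ι) : K[X] :=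
  C (x i) * (1 + X) ^ (l i).toNat - if i = i₁ then C (l i₁ * x i₁) * X else 0

theorem ne_mul_of_coeff_orbitPoly_ne_zero {l : ι → ℤ} (hl : Function.Injective l) {i₁ : ι}
    {x : ι → K} (hpos : 0 < l i₁) (hx : ∀ i, x i ≠ 0 → 0 < l i ∧ l i ≤ l i₁) {i : ι} {j : ℕ}
    (hij : (orbitPoly l i₁ x i).coeff j ≠ 0) : l i ≠ j * l i₁ := by
  intro heq
  by_cases hi : i = i₁
  · subst hi
    obtain rfl : j = 1 := by
      exact_mod_cast mul_right_cancel₀ hpos.ne' (heq.symm.trans (one_mul _).symm)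
    have hcast : ((l i).toNat : K) = l i := by
      rw [← Int.cast_natCast, Int.toNat_of_nonneg hpos.le]
    apply hij
    simp [orbitPoly, coeff_one_add_X_pow, hcast, mul_comm]
  · have hxi : x i ≠ 0 := fun h0 => hij (by simp [orbitPoly, h0, hi])
    obtain ⟨hli, hle⟩ := hx i hxi
    have hlt : l i < l i₁ := lt_of_le_of_ne hle (hl.ne hi)
    have hj : 0 < (j : ℤ) := pos_of_mul_pos_left (heq ▸ hli) hpos.le
    nlinarith

theorem orbitPoly_add_linear {l : ι → ℤ} {i₁ : ι} {x : ι → K} (hx : ∀ i, x i ≠ 0 → 0 < l i)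
    {b : K} (hb : 1 + b ≠ 0) :
    polyCurve (orbitPoly l i₁ x) b + Pi.single i₁ (l i₁ * x i₁ * b) =
      weightMap l (Units.mk0 _ hb) x := by
  funext i
  have horbit : x i * (1 + b) ^ (l i).toNat = (Units.mk0 _ hb ^ l i : Kˣ) * x i := by
    by_cases hxi : x i = 0
    · rw [hxi, zero_mul, mul_zero]
    · rw [coe_mk0_zpow hb (hx i hxi).le, mul_comm]
  rw [weightMap_apply, ← horbit]
  by_cases hi : i = i₁
  · subst hi
    simp [polyCurve, orbitPoly]
  · simp [polyCurve, orbitPoly, hi]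

/-- Along the orbit `b ↦ (1 + b) • x` only the linear term at `i₁` cannot be removed, and `φ` has
mean zero along the curve left over. -/
theorem eq_zero_of_weights_pos [Finite ι] [Infinite K] {M : Mean K} (hM : M.IsAffineInvariant)
    {φ : (ι → K) → ℝ} (h : IsPosDef φ) {l : ι → ℤ} (hφ : IsWeightInvariant l φ)
    (hl : Function.Injective l) {i₁ : ι} (hl₁ : (l i₁ : K) ≠ 0)
    (hline : M (fun b => φ (Pi.single i₁ b)) = 0) {x : ι → K} (hx₁ : x i₁ ≠ 0)
    (hx : ∀ i, x i ≠ 0 → 0 < l i ∧ l i ≤ l i₁) : φ x = 0 := by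
  let 𝓡 : Set (K → ι → K) := {R | ∃ c : K, c ≠ 0 ∧ R = fun b => Pi.single i₁ (c * b)}
  obtain ⟨J, hJ⟩ := exists_finset_coeff_ne_zero (orbitPoly l i₁ x)
  refine (mean_eq_of_eventually_eq_weightMap hM h.isBoundedFun hφ ?_).symm.trans <|
    mean_comp_polyCurve_add_eq_zero hM h hφ i₁ (𝓡 := 𝓡) ?_ J ?_
      (fun q hq => ne_mul_of_coeff_orbitPoly_ne_zero hl (hx i₁ hx₁).1 hx ((hJ q.1 q.2).1 hq))
      (orbitPoly l i₁ x) (fun i j => (hJ i j).2) ⟨_, mul_ne_zero hl₁ hx₁, rfl⟩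
  · filter_upwards [eventually_cofinite_one_add_ne_zero K] with b hb
    exact ⟨_, orbitPoly_add_linear (fun i hi => (hx i hi).1) hb⟩
  · rintro _ ⟨c, hc, rfl⟩
    exact (hM.mul_left c hc _ (h.isBoundedFun.comp fun b => Pi.single i₁ b)).trans hline
  · rintro _ ⟨c, hc, rfl⟩ ⟨i, j⟩ - μ μ' hμ
    refine ⟨_, mul_ne_zero (sub_ne_zero.2 (Units.val_injective.ne hμ)) hc, ?_⟩
    funext b i'
    rw [Pi.sub_apply, Pi.sub_apply, twist_apply, twist_apply]
    by_cases hi : i' = i₁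
    · subst hi
      simp only [Pi.single_eq_same, sub_eq_neg_add (l i), zpow_add, Units.val_mul, neg_mul]
      ring
    · simp [hi]

/-- The function `r` agrees off a finite set with a rational function `N / D`, normalized by
`D 0 = 1`, whose derivative at `0` is `s`. -/
def HasRatDerivZero (r : K → K) (s : K) : Prop :=
  ∃ N D : K[X], D.eval 0 = 1 ∧ (∀ᶠ b in cofinite, r b * D.eval b = N.eval b) ∧
    N.derivative.eval 0 - N.eval 0 * D.derivative.eval 0 = s

namespace HasRatDerivZero

variable {r r' : K → K} {s s' : K}

theorem sub (hr : HasRatDerivZero r s) (hr' : HasRatDerivZero r' s') :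
    HasRatDerivZero (fun b => r b - r' b) (s - s') := by
  obtain ⟨N, D, hD, hND, rfl⟩ := hr
  obtain ⟨N', D', hD', hND', rfl⟩ := hr'
  refine ⟨N * D' - N' * D, D * D', by simp [hD, hD'], ?_, ?_⟩
  · filter_upwards [hND, hND'] with b hb hb'
    simp only [eval_mul, eval_sub, ← hb, ← hb']
    ring
  · simp only [derivative_mul, derivative_sub, eval_add, eval_sub, eval_mul, hD, hD']
    ring

theorem comp_mul_left (hr : HasRatDerivZero r s) (c : K) {u : K} (hu : u ≠ 0) :
    HasRatDerivZero (fun b => c * r (u * b)) (c * (u * s)) := by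
  obtain ⟨N, D, hD, hND, rfl⟩ := hr
  refine ⟨C c * N.comp (C u * X), D.comp (C u * X), by simp [hD], ?_, ?_⟩
  · filter_upwards [(mul_right_injective₀ hu).tendsto_cofinite.eventually hND] with b hb
    simp [← hb, mul_assoc]
  · simp [derivative_comp]
    ring

theorem eventually_ne_zero (hr : HasRatDerivZero r s) (hs : s ≠ 0) :
    ∀ᶠ b in cofinite, r b ≠ 0 := by
  obtain ⟨N, D, -, hND, rfl⟩ := hr
  have hN : N ≠ 0 := by
    rintro rfl
    simp at hs
  filter_upwards [hND, (finite_setOfPred_isRoot hN).eventually_cofinite_notMem] with b hb hroot h0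
  exact hroot (by simp [← hb, h0])

theorem const_mul_inv_one_add_pow (c : K) (n : ℕ) :
    HasRatDerivZero (fun b => c * ((1 + b) ^ n)⁻¹) (-(c * n)) := by
  refine ⟨C c, (1 + X) ^ n, by simp, ?_, by simp [derivative_pow]⟩
  filter_upwards [eventually_cofinite_one_add_ne_zero K] with b hb
  simp [hb]

end HasRatDerivZero

/-- The part of the orbit `b ↦ (1 + b)⁻¹ • x` in the coordinates of negative weight, where it is
polynomial. -/
noncomputable def orbitNegPart (l : ι → ℤ) (x : ι → K) (i : ι) : K[X] :=
  if l i < 0 then C (x i) * (1 + X) ^ (-l i).toNat else 0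

/-- The part of the orbit `b ↦ (1 + b)⁻¹ • x` in the coordinates of positive weight. -/
noncomputable def orbitPosPart (l : ι → ℤ) (x : ι → K) (b : K) (i : ι) : K :=
  if 0 < l i then x i * ((1 + b) ^ (l i).toNat)⁻¹ else 0

theorem orbitNegPart_add_orbitPosPart {l : ι → ℤ} (hl0 : ∀ i, l i ≠ 0) (x : ι → K) {b : K}
    (hb : 1 + b ≠ 0) :
    polyCurve (orbitNegPart l x) b + orbitPosPart l x b =
      weightMap l (Units.mk0 _ hb)⁻¹ x := by
  funext i
  rw [weightMap_apply, Pi.add_apply, polyCurve, orbitNegPart, orbitPosPart]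
  rcases (hl0 i).lt_or_gt with hneg | hpos
  · rw [if_pos hneg, if_neg hneg.not_gt, inv_zpow', coe_mk0_zpow hb (by lia)]
    simp [mul_comm]
  · rw [if_neg hpos.not_gt, if_pos hpos, inv_zpow, Units.val_inv_eq_inv_val,
      coe_mk0_zpow hb hpos.le]
    simp [mul_comm]

theorem ne_mul_of_coeff_orbitNegPart_ne_zero {l : ι → ℤ} {i₁ : ι} (hpos : 0 < l i₁) {x : ι → K}
    {i : ι} {j : ℕ} (hij : (orbitNegPart l x i).coeff j ≠ 0) : l i ≠ j * l i₁ := by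
  have hneg : l i < 0 := by
    by_contra hle
    simp [orbitNegPart, hle] at hij
  have : 0 ≤ j * l i₁ := by positivity
  lia

/-- The curves with coordinates of positive weight at most `l i₁` whose coordinate at `i₁` has
a nonzero derivative at `0`. -/
def positiveCurves (l : ι → ℤ) (i₁ : ι) : Set (K → ι → K) :=
  {R | (∀ b i, R b i ≠ 0 → 0 < l i ∧ l i ≤ l i₁) ∧ ∃ s ≠ 0, HasRatDerivZero (fun b => R b i₁) s}

theorem orbitPosPart_mem_positiveCurves {l : ι → ℤ} {i₁ : ι} (hl₁ : (l i₁ : K) ≠ 0)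
    (hpos : 0 < l i₁) {x : ι → K} (hx₁ : x i₁ ≠ 0) (hx : ∀ i, x i ≠ 0 → l i ≤ l i₁) :
    orbitPosPart l x ∈ positiveCurves l i₁ := by
  have hcast : ((l i₁).toNat : K) = l i₁ := by
    rw [← Int.cast_natCast, Int.toNat_of_nonneg hpos.le]
  refine ⟨fun b i hne => ?_, -(x i₁ * (l i₁).toNat), ?_, ?_⟩
  · rw [orbitPosPart] at hne
    split_ifs at hne with hi
    · exact ⟨hi, hx i (left_ne_zero_of_mul hne)⟩
    · exact absurd rfl hne
  · rw [hcast]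
    exact neg_ne_zero.2 (mul_ne_zero hx₁ hl₁)
  · simpa only [orbitPosPart, if_pos hpos] using .const_mul_inv_one_add_pow (x i₁) (l i₁).toNat

theorem twist_sub_twist_mem_positiveCurves {l : ι → ℤ} {i₁ : ι} {R : K → ι → K}
    (hR : R ∈ positiveCurves l i₁) (i : ι) (j : ℕ) {μ μ' : Kˣ}
    (hμ : μ ^ (l i - j * l i₁) ≠ μ' ^ (l i - j * l i₁)) :
    twist l i j μ R - twist l i j μ' R ∈ positiveCurves l i₁ := by
  obtain ⟨hsupp, s, hs, hderiv⟩ := hR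
  refine ⟨fun b i' hne => ?_,
    ((μ ^ (l i - j * l i₁) : Kˣ) - (μ' ^ (l i - j * l i₁) : Kˣ)) * s,
    mul_ne_zero (sub_ne_zero.2 (Units.val_injective.ne hμ)) hs, ?_⟩
  · by_contra hi'
    have hzero (b : K) : R b i' = 0 := not_not.1 fun hb => hi' (hsupp b i' hb)
    simp [twist_apply, hzero] at hne
  · simp only [Pi.sub_apply, twist_apply]
    convert (hderiv.comp_mul_left (μ ^ (-j * l i₁) : Kˣ) (μ ^ l i).ne_zero).sub
      (hderiv.comp_mul_left (μ' ^ (-j * l i₁) : Kˣ) (μ' ^ l i).ne_zero) using 1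
    simp only [sub_eq_add_neg (l i), zpow_add, Units.val_mul, neg_mul]
    ring

/-- The orbit `b ↦ (1 + b)⁻¹ • x` is polynomial in the coordinates of negative weight. Removing
these monomials leaves curves to which `eq_zero_of_weights_pos` applies pointwise. -/
theorem eq_zero_of_weights_le [Finite ι] [Infinite K] {M : Mean K} (hM : M.IsAffineInvariant)
    {φ : (ι → K) → ℝ} (h : IsPosDef φ) {l : ι → ℤ} (hφ : IsWeightInvariant l φ)
    (hl : Function.Injective l) (hl0 : ∀ i, l i ≠ 0) {i₁ : ι} (hl₁ : (l i₁ : K) ≠ 0)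
    (hpos : 0 < l i₁) (hline : M (fun b => φ (Pi.single i₁ b)) = 0) {x : ι → K}
    (hx₁ : x i₁ ≠ 0) (hx : ∀ i, x i ≠ 0 → l i ≤ l i₁) : φ x = 0 := by
  obtain ⟨J, hJ⟩ := exists_finset_coeff_ne_zero (orbitNegPart l x)
  refine (mean_eq_of_eventually_eq_weightMap hM h.isBoundedFun hφ ?_).symm.trans <|
    mean_comp_polyCurve_add_eq_zero hM h hφ i₁ (𝓡 := positiveCurves l i₁) ?_ J
      (fun R hR q _ μ μ' => twist_sub_twist_mem_positiveCurves hR q.1 q.2)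
      (fun q hq => ne_mul_of_coeff_orbitNegPart_ne_zero hpos ((hJ q.1 q.2).1 hq))
      (orbitNegPart l x) (fun i j => (hJ i j).2)
      (orbitPosPart_mem_positiveCurves hl₁ hpos hx₁ hx)
  · filter_upwards [eventually_cofinite_one_add_ne_zero K] with b hb
    exact ⟨_, orbitNegPart_add_orbitPosPart hl0 x hb⟩
  · rintro R ⟨hR, s, hs, hderiv⟩
    refine (M.map_congr_cofinite hM.add_right (h.isBoundedFun.comp R) (.const 0) ?_).trans
      (M.map_const 0)
    filter_upwards [hderiv.eventually_ne_zero hs] with b hb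
    exact eq_zero_of_weights_pos hM h hφ hl hl₁ hline hb (hR b)

theorem IsWeightInvariant.lineMean_single {M : Mean K} (hM : M.IsAffineInvariant)
    {φ : (ι → K) → ℝ} (hbdd : IsBoundedFun φ) {l : ι → ℤ} (hφ : IsWeightInvariant l φ) (i : ι) :
    IsWeightInvariant l (M.lineMean (AddMonoidHom.single (fun _ => K) i) φ) := fun a x => by
  refine Eq.trans (congrArg M (funext fun b => ?_)) <|
    hM.mul_left ((a ^ l i)⁻¹ : Kˣ) (Units.ne_zero _) _
      (hbdd.comp fun b => x + AddMonoidHom.single (fun _ => K) i b)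
  rw [← hφ a (x + _), map_add]
  congr 2
  funext i'
  by_cases hi : i' = i
  · subst hi
    simp [-Units.val_zpow_eq_zpow_val]
  · simp [hi]

/-- The difference of `φ` and its line mean has mean zero along the line. -/
theorem apply_eq_lineMean_single [Finite ι] [Infinite K] {M : Mean K} (hM : M.IsAffineInvariant)
    {φ : (ι → K) → ℝ} (h : IsPosDef φ) {l : ι → ℤ} (hφ : IsWeightInvariant l φ)
    (hl : Function.Injective l) (hl0 : ∀ i, l i ≠ 0) {i₁ : ι} (hl₁ : (l i₁ : K) ≠ 0)
    (hpos : 0 < l i₁) {x : ι → K} (hx₁ : x i₁ ≠ 0) (hx : ∀ i, x i ≠ 0 → l i ≤ l i₁) :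
    φ x = M.lineMean (AddMonoidHom.single (fun _ => K) i₁) φ x := by
  have hψ := hφ.lineMean_single hM h.isBoundedFun i₁
  set t := AddMonoidHom.single (fun _ : ι => K) i₁
  have hline : M (fun b => φ (t b) - M.lineMean t φ (t b)) = 0 := by
    have hconst (b : K) : M.lineMean t φ (t b) = M.lineMean t φ 0 := by
      rw [← h.lineMean_add hM t 0 b, zero_add]
    simp only [hconst]
    rw [M.map_sub (h.isBoundedFun.comp _) (.const _), M.map_const, sub_eq_zero]
    simp only [Mean.lineMean, zero_add]
  exact sub_eq_zero.1 <| eq_zero_of_weights_le hM (h.isPosDef_sub_lineMean hM t)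
    (fun a y => congrArg₂ _ (hφ a y) (hψ a y)) hl hl0 hl₁ hpos hline hx₁ hx

theorem exists_isPosDef_apply_eq_update_of_pos [Finite ι] [Infinite K] {φ : (ι → K) → ℝ}
    (h : IsPosDef φ) {l : ι → ℤ} (hφ : IsWeightInvariant l φ) (hl : Function.Injective l)
    (hl0 : ∀ i, (l i : K) ≠ 0) {x : ι → K} (hx : ∃ i, x i ≠ 0 ∧ 0 < l i) :
    ∃ φ', IsPosDef φ' ∧ IsWeightInvariant l φ' ∧
      ∃ i, x i ≠ 0 ∧ φ x = φ' (Function.update x i 0) := by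
  obtain ⟨M, hM⟩ := Mean.exists_isAffineInvariant K
  obtain ⟨i₀, hi₀, hpos⟩ := hx
  obtain ⟨i, hi, hmax⟩ := Set.exists_max_image {i | x i ≠ 0} l (Set.toFinite _) ⟨i₀, hi₀⟩
  refine ⟨_, h.isPosDef_lineMean hM (AddMonoidHom.single (fun _ => K) i),
    hφ.lineMean_single hM h.isBoundedFun i, i, hi, ?_⟩
  rw [apply_eq_lineMean_single hM h hφ hl (fun i h0 => hl0 i (by simp [h0])) (hl0 i)
    (hpos.trans_le (hmax i₀ hi₀)) hi hmax, ← h.lineMean_add hM _ (Function.update x i 0) (x i)]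
  congr 1
  funext i'
  by_cases hi' : i' = i
  · subst hi'
    simp
  · simp [hi']

theorem exists_isPosDef_apply_eq_update [Finite ι] [Infinite K] {φ : (ι → K) → ℝ}
    (h : IsPosDef φ) {l : ι → ℤ} (hφ : IsWeightInvariant l φ) (hl : Function.Injective l)
    (hl0 : ∀ i, (l i : K) ≠ 0) {x : ι → K} (hx : x ≠ 0) :
    ∃ φ', IsPosDef φ' ∧ IsWeightInvariant l φ' ∧
      ∃ i, x i ≠ 0 ∧ φ x = φ' (Function.update x i 0) := by
  obtain ⟨i, hi⟩ := Function.ne_iff.1 hx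
  have hli : l i ≠ 0 := fun h0 => hl0 i (by simp [h0])
  rcases hli.lt_or_gt with hneg | hpos
  · obtain ⟨φ', h', hφ', hex⟩ := exists_isPosDef_apply_eq_update_of_pos h hφ.neg
      (neg_injective.comp hl) (by simpa using hl0) ⟨i, hi, neg_pos.2 hneg⟩
    exact ⟨φ', h', neg_neg l ▸ hφ'.neg, hex⟩
  · exact exists_isPosDef_apply_eq_update_of_pos h hφ hl hl0 ⟨i, hi, hpos⟩

theorem IsPosDef.nonneg_of_isWeightInvariant [Finite ι] [Infinite K] {φ : (ι → K) → ℝ}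
    (h : IsPosDef φ) {l : ι → ℤ} (hφ : IsWeightInvariant l φ) (hl : Function.Injective l)
    (hl0 : ∀ i, (l i : K) ≠ 0) (x : ι → K) : 0 ≤ φ x := by
  induction hn : (Function.support x).ncard using Nat.strong_induction_on generalizing φ x with
  | _ n ih =>
    by_cases hx : x = 0
    · rw [hx]
      exact (abs_nonneg _).trans (h.abs_apply_le 0)
    · obtain ⟨φ', h', hφ', i, hi, heq⟩ := exists_isPosDef_apply_eq_update h hφ hl hl0 hx
      rw [heq]
      refine ih _ ?_ h' hφ' _ rfl
      rw [← hn, Function.support_update_zero]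
      exact Set.ncard_sdiff_singleton_lt_of_mem hi

end Weights

theorem exists_eq_expChar_pow_mul (K : Type*) [Field K] (p : ℕ) [hp : ExpChar K p] {m : ℤ}
    (hm : m ≠ 0) : ∃ (k : ℕ) (l : ℤ), m = l * (p ^ k : ℕ) ∧ (l : K) ≠ 0 := by
  cases hp with
  | zero => exact ⟨0, m, by simp, Int.cast_ne_zero.2 hm⟩
  | prime hprime =>
    have hfin : FiniteMultiplicity (p : ℤ) m :=
      Int.finiteMultiplicity_iff.2 ⟨by simpa using hprime.ne_one, hm⟩
    obtain ⟨l, hml, hdvd⟩ := hfin.exists_eq_pow_mul_and_not_dvd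
    exact ⟨_, l, by rw [Nat.cast_pow, mul_comm]; exact hml,
      fun h0 => hdvd ((CharP.intCast_eq_zero_iff K p l).1 h0)⟩

section Recurrence

variable {K U ι : Type*} [Field K] [AddCommGroup U] [Module K U]
  {Usub : ι → Submodule K U} {m : ι → ℤ} {ρ : Kˣ →* (U ≃ₗ[K] U)}

/-- A weight divisible by the characteristic is made invertible in `K` by taking `p`-th roots of
the coordinate, which is why `θ` is additive but not linear. -/
theorem exists_addMonoidHom_weightMap (hm0 : ∀ i, m i ≠ 0)
    (hweight : ∀ (i : ι) (a : Kˣ) (u : U), u ∈ Usub i → ρ a u = ((a ^ m i : Kˣ) : K) • u)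
    {f : U} (hf : f ∈ ⨆ i, Usub i) :
    ∃ (S : Finset ℤ) (θ : (S → K) →+ U), (∀ l ∈ S, (l : K) ≠ 0) ∧ θ 1 = f ∧
      ∀ a x, ρ a (θ x) = θ (weightMap (fun l : S => (l : ℤ)) a x) := by
  obtain ⟨v, hv, hvf⟩ := (Submodule.mem_iSup_iff_exists_finsupp _ _).1 hf
  obtain ⟨p, hp⟩ := ExpChar.exists K
  choose k l hkl hl using fun i => exists_eq_expChar_pow_mul K p (hm0 i)
  let S := v.support.image l
  let coord (i : v.support) : S := ⟨l i, Finset.mem_image_of_mem l i.2⟩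
  let θ : (S → K) →+ U := AddMonoidHom.mk'
    (fun x => ∑ i : v.support, x (coord i) ^ p ^ k i • v i) fun x y => by
      simp only [Pi.add_apply, add_pow_expChar_pow, add_smul, Finset.sum_add_distrib]
  refine ⟨S, θ, ?_, ?_, fun a x => ?_⟩
  · simp only [S, Finset.forall_mem_image]
    exact fun i _ => hl i
  · simpa [θ, ← Finset.sum_coe_sort v.support, Finsupp.sum] using hvf
  · simp only [θ, AddMonoidHom.mk'_apply, map_sum, map_smul, hweight _ a _ (hv _), smul_smul,
      weightMap_apply, mul_pow, ← Units.val_pow_eq_pow_val]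
    refine Finset.sum_congr rfl fun i _ => ?_
    rw [mul_comm, ← zpow_natCast (a ^ _), ← zpow_mul, hkl i]

theorem IsPosDef.mean_orbit_nonneg [Infinite K] {c : U → ℝ} (hc : IsPosDef c)
    (hm0 : ∀ i, m i ≠ 0)
    (hweight : ∀ (i : ι) (a : Kˣ) (u : U), u ∈ Usub i → ρ a u = ((a ^ m i : Kˣ) : K) • u)
    {L : Mean Kˣ} (hL : ∀ a : Kˣ, L.IsInvariant (a * ·)) {f : U} (hf : f ∈ ⨆ i, Usub i) :
    0 ≤ L fun a => c (ρ a f) := by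
  obtain ⟨S, θ, hS, rfl, hθ⟩ := exists_addMonoidHom_weightMap hm0 hweight hf
  let φ (x : S → K) : ℝ := L fun a => c (ρ a (θ x))
  have hφ : IsPosDef φ := hc.mean_comp L fun a => ((ρ a : U →ₗ[K] U) : U →+ U).comp θ
  have hinv : IsWeightInvariant (fun l : S => (l : ℤ)) φ := fun a x => by
    refine Eq.trans (congrArg L (funext fun b => ?_))
      (hL a _ (hc.isBoundedFun.comp fun b => ρ b (θ x)))
    rw [← hθ, ← LinearEquiv.mul_apply, ← map_mul, mul_comm b a]
  exact hφ.nonneg_of_isWeightInvariant hinv Subtype.val_injective (fun l => hS l l.2) 1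

theorem mean_sub_mul_sub {N : Mean U} (hN : ∀ u, N.IsInvariant (· + u)) {g : U → ℝ}
    (hg : IsBoundedFun g) (u : U) :
    N (fun x => (g x - N g) * (g (x + u) - N g)) = N (fun x => g x * g (x + u)) - N g ^ 2 := by
  have hshift := hg.comp (· + u)
  have hlinear := (hg.const_mul (N g)).add (hshift.const_mul (N g))
  have hexpand : (fun x => (g x - N g) * (g (x + u) - N g)) =
      fun x => g x * g (x + u) - (N g * g x + N g * g (x + u) - N g ^ 2) := by
    funext x
    ring
  rw [hexpand, N.map_sub (hg.mul hshift) (hlinear.sub (.const _)), N.map_sub hlinear (.const _),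
    N.map_add (hg.const_mul _) (hshift.const_mul _), N.map_const_mul _ hg,
    N.map_const_mul _ hshift, N.map_const, hN u g hg]
  ring

/-- The averages of the autocorrelation of the balanced indicator function of `B` along the orbits
are nonnegative, but would equal `-(N.measure B) ^ 2` if `B` did not return to itself. -/
theorem exists_mem_add_mem [Infinite K] (hm0 : ∀ i, m i ≠ 0)
    (hweight : ∀ (i : ι) (a : Kˣ) (u : U), u ∈ Usub i → ρ a u = ((a ^ m i : Kˣ) : K) • u)
    {N : Mean U} (hN : ∀ u, N.IsInvariant (· + u)) {B : Set U} (hB : 0 < N.measure B)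
    {f : U} (hf : f ∈ ⨆ i, Usub i) : ∃ a : Kˣ, ∃ u ∈ B, u + ρ a f ∈ B := by
  by_contra! hcon
  obtain ⟨L, hL⟩ := Mean.exists_isInvariant_mul_left Kˣ
  have hc := IsPosDef.autocorrelation hN ((IsBoundedFun.indicator_one B).sub (.const (N.measure B)))
  have hreturn (a : Kˣ) : N (fun x => (B.indicator 1 x - N.measure B) *
      (B.indicator 1 (x + ρ a f) - N.measure B)) = -N.measure B ^ 2 := by
    have hzero (x : U) : B.indicator (1 : U → ℝ) x * B.indicator 1 (x + ρ a f) = 0 := by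
      by_cases hx : x ∈ B
      · simp [hcon a x hx]
      · simp [hx]
    refine (mean_sub_mul_sub hN (.indicator_one B) _).trans ?_
    simp only [hzero, N.map_const, zero_sub, Mean.measure]
  have hnonneg := hc.mean_orbit_nonneg hm0 hweight hL hf
  simp only [hreturn, L.map_const] at hnonneg
  linarith [pow_pos hB 2]

end Recurrence

theorem abs_sum_sub_sum_le {α : Type*} {f : α → ℝ} {C : ℝ} (hC : ∀ x, |f x| ≤ C)
    (s t : Finset α) : |∑ x ∈ s, f x - ∑ x ∈ t, f x| ≤ ((s \ t).card + (t \ s).card) * C := by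
  have hsum (s : Finset α) : |∑ x ∈ s, f x| ≤ s.card * C :=
    (Finset.abs_sum_le_sum_abs _ _).trans <|
      (Finset.sum_le_card_nsmul s _ C fun x _ => hC x).trans_eq (nsmul_eq_mul _ _)
  rw [← Finset.sum_sdiff_sub_sum_sdiff, add_mul]
  exact (abs_sub _ _).trans (add_le_add (hsum _) (hsum _))

section Folner

variable {U : Type*} [AddCommGroup U]

namespace Mean

theorem abs_avg_add_right_sub_avg_le {s : Finset U} (hs : s.Nonempty) (u : U) {f : U → ℝ} {C : ℝ}
    (hC : ∀ x, |f x| ≤ C) :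
    |avg s hs (fun x => f (x + u)) - avg s hs f| ≤
      2 * C * (1 - (s ∩ s.image (· + u)).card / s.card) := by
  have hcard : (0 : ℝ) < s.card := Nat.cast_pos.2 hs.card_pos
  set t := s.image (· + u)
  have hcardt : t.card = s.card := Finset.card_image_of_injective _ (add_left_injective u)
  have hst : (s.card : ℝ) = (s ∩ t).card + (s \ t).card :=
    mod_cast (Finset.card_inter_add_card_sdiff s t).symm
  have hts : (s.card : ℝ) = (s ∩ t).card + (t \ s).card := by
    rw [← hcardt, Finset.inter_comm]
    exact mod_cast (Finset.card_inter_add_card_sdiff t s).symm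
  have hsum : ∑ x ∈ s, f (x + u) = ∑ x ∈ t, f x :=
    (Finset.sum_image (add_left_injective u).injOn).symm
  change |(∑ x ∈ s, f (x + u)) / s.card - (∑ x ∈ s, f x) / s.card| ≤ _
  rw [hsum, ← sub_div, abs_div, abs_of_pos hcard, div_le_iff₀ hcard]
  refine (abs_sum_sub_sum_le hC t s).trans_eq ?_
  field_simp
  linear_combination -C * (hst + hts)

theorem isInvariant_ultra_bind_avg {F : ℕ → Finset U} (hF : IsAddFolner F) {𝒰 : Ultrafilter ℕ}
    (h𝒰 : (𝒰 : Filter ℕ) ≤ atTop) (u : U) :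
    ((ultra 𝒰).bind fun n => avg (F n) (hF.1 n)).IsInvariant (· + u) :=
  isInvariant_ultra_bind fun f ⟨C, hC⟩ => by
    have hlim := ((hF.2 u).const_sub 1).const_mul (2 * C)
    rw [sub_self, mul_zero] at hlim
    exact squeeze_zero_norm (fun n => abs_avg_add_right_sub_avg_le (hF.1 n) u hC)
      (hlim.mono_left h𝒰)

end Mean

theorem PosUpperBanachDensity.exists_mean {E : Set U} (hE : PosUpperBanachDensity E) :
    ∃ N : Mean U, (∀ u, N.IsInvariant (· + u)) ∧ 0 < N.measure E := by
  obtain ⟨F, hF, hpos⟩ := hE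
  obtain ⟨δ, hδ0, hδ⟩ := exists_between hpos
  let A (n : ℕ) : Mean U := Mean.avg (F n) (hF.1 n)
  have hfreq : ∃ᶠ n in atTop, δ < (A n).measure E := by
    simp only [A, Mean.measure_avg]
    exact frequently_lt_of_lt_limsup
      (isCoboundedUnder_le_of_le atTop (x := 0) fun n => by positivity) hδ
  have hne : (atTop ⊓ 𝓟 {n | δ < (A n).measure E}).NeBot := frequently_mem_iff_neBot.1 hfreq
  have h𝒰 := Ultrafilter.of_le (atTop ⊓ 𝓟 {n | δ < (A n).measure E})
  refine ⟨_, Mean.isInvariant_ultra_bind_avg hF (h𝒰.trans inf_le_left), hδ0.trans_le ?_⟩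
  refine ge_of_tendsto
    (Mean.tendsto_ultra _ (Mean.isBoundedFun_apply A (.indicator_one E))) ?_
  filter_upwards [h𝒰.trans inf_le_right (mem_principal_self _)] with n hn
  exact hn.le

end Folner

theorem exists_mem_forall_exists_add_mem {K U ι : Type*} [Field K] [Infinite K] [AddCommGroup U]
    [Module K U] {Usub : ι → Submodule K U} {m : ι → ℤ} (hm0 : ∀ i, m i ≠ 0)
    {ρ : Kˣ →* (U ≃ₗ[K] U)} (htop : ⨆ i, Usub i = ⊤)
    (hweight : ∀ (i : ι) (a : Kˣ) (u : U), u ∈ Usub i → ρ a u = ((a ^ m i : Kˣ) : K) • u)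
    {N : Mean U} (hN : ∀ u, N.IsInvariant (· + u)) {E : Set U} (hE : 0 < N.measure E)
    (F : Finset U) : ∃ u ∈ E, ∀ f ∈ F, ∃ a : Kˣ, u + ρ a f ∈ E := by
  let B (f : U) : Set U := {x ∈ E | ∀ a : Kˣ, x + ρ a f ∉ E}
  have hB (f : U) : N.measure (B f) ≤ 0 := by
    by_contra! hpos
    obtain ⟨a, u, hu, hua⟩ :=
      exists_mem_add_mem hm0 hweight hN hpos (htop ▸ Submodule.mem_top : f ∈ ⨆ i, Usub i)
    exact hu.2 a hua.1
  obtain ⟨u, hu, huB⟩ := N.exists_mem_forall_notMem hE F fun f _ => hB f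
  exact ⟨u, hu, fun f hf => by simpa [B, hu] using huB f hf⟩

theorem statement9_general {K U Y ι : Type*} [Field K] [Infinite K] [AddCommGroup U] [Module K U]
    (Usub : ι → Submodule K U) (m : ι → ℤ) (hm0 : ∀ i, m i ≠ 0) (ρ : Kˣ →* (U ≃ₗ[K] U))
    (htop : ⨆ i, Usub i = ⊤)
    (hweight : ∀ (i : ι) (a : Kˣ) (u : U), u ∈ Usub i → ρ a u = ((a ^ m i : Kˣ) : K) • u)
    (ψ : U → Y) (hψ : ∀ (a : Kˣ) (u : U), ψ (ρ a u) = ψ u)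
    {N : Mean U} (hN : ∀ u, N.IsInvariant (· + u)) {E : Set U} (hE : 0 < N.measure E) :
    (∀ F : Finset U, ∃ uF ∈ E, ψ '' ↑F ⊆ ψ '' ((fun x => x - uF) '' E)) ∧
      ψ '' (E - E) = Set.range ψ := by
  have hreturn := exists_mem_forall_exists_add_mem hm0 htop hweight hN hE
  refine ⟨fun F => ?_, (Set.image_subset_range _ _).antisymm ?_⟩
  · obtain ⟨u, hu, hF⟩ := hreturn F
    refine ⟨u, hu, ?_⟩
    rintro _ ⟨f, hf, rfl⟩
    obtain ⟨a, ha⟩ := hF f hf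
    exact ⟨ρ a f, ⟨_, ha, add_sub_cancel_left _ _⟩, hψ a f⟩
  · rintro _ ⟨f, rfl⟩
    obtain ⟨u, hu, hF⟩ := hreturn {f}
    obtain ⟨a, ha⟩ := hF f (Finset.mem_singleton_self f)
    exact ⟨ρ a f, ⟨_, ha, u, hu, add_sub_cancel_left _ _⟩, hψ a f⟩

/-- Pinned images of invariant functions: for a diagonalizable representation of `K^*` on a
countable `K`-vector space `U` with nonzero integer weights, any `ρ_U`-invariant function
`ψ` and any set `E ⊆ U` of positive upper Banach density, every finite set of `ψ`-values of
`U` is realized inside `ψ(E - u_F)` for some pin `u_F ∈ E`; in particular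
`ψ(E - E) = ψ(U)`. -/
theorem statement9
    {K U Y : Type*} [Field K] [Countable K] [Infinite K]
    [AddCommGroup U] [Module K U] [Countable U]
    (r : ℕ) (Usub : Fin r → Submodule K U) (m : Fin r → ℤ)
    (hminj : Function.Injective m) (hm0 : ∀ i, m i ≠ 0)
    (ρ : Kˣ →* (U ≃ₗ[K] U))
    (hinternal : DirectSum.IsInternal Usub)
    (hweight : ∀ (i : Fin r) (a : Kˣ) (u : U), u ∈ Usub i → ρ a u = ((a ^ m i : Kˣ) : K) • u)
    (ψ : U → Y) (hψ : ∀ (a : Kˣ) (u : U), ψ (ρ a u) = ψ u)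
    (E : Set U) (hE : PosUpperBanachDensity E) :
    (∀ F : Finset U, ∃ uF ∈ E, ψ '' ↑F ⊆ ψ '' ((fun x => x - uF) '' E)) ∧
      ψ '' (E - E) = Set.range ψ := by
  obtain ⟨N, hN, hNE⟩ := hE.exists_mean
  exact statement9_general Usub m hm0 ρ hinternal.submodule_iSup_eq_top hweight ψ hψ hN hNE
end

section
/- Let K be a countably infinite field with characteristic different from 2, and let E ⊆ K² be a set with positive upper Banach density (with respect to the additive group (K²,+)). Then for every z ∈ K there exist points (x₁, x₂), (y₁, y₂) ∈ E such that (x₁ − y₁)² − (x₂ − y₂)² = z. -/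
open Filter Topology Pointwise
open scoped Classical

/-!
Let `δ > 0` be the density of `E` along a Følner sequence. The autocorrelation
`ψ d = lim 𝔼 (1_E (x + d) - δ) (1_E x - δ)` is positive definite and equals `-δ ^ 2` off `E - E`.
If `x ^ 2 - y ^ 2 = z` has no solution in `E - E`, then in the coordinates `x = (a + b) / 2`,
`y = (a - b) / 2` the function `ψ` is negative on all of `a b = z`. For `z = 0` this contradicts
`0 ≤ ψ 0`. For `z ≠ 0`, the Markov–Kakutani theorem, applied to the commuting maps
`(a, b) ↦ (t a, t⁻¹ b)`, replaces `ψ` by an invariant positive definite `f` with the same bound,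
and it remains to see that such an `f` is nonnegative off `a b = 0`.

Realize `f (p - q)` as `⟪v p, v q⟫` in a Hilbert space. There `v (w, 0)` converges weakly, because
by invariance `f` is constant on the punctured axis; pairing with `v (0, -1)` shows that `f d`
tends to some `m` as `d.1 * d.2` leaves finite sets. Hence `v (u, u)` and `v (u, z / u)` have weak
limits all of whose mutual inner products are `m`, so the two limits are the same vector `e`, and
`m = ‖e‖ ^ 2`. Pairing `e` with `v 0` gives `m` along the diagonal and the value of `f` on
`a b = z` along the hyperbola.
-/

open scoped BigOperators RealInnerProductSpace

universe u

theorem birkhoffAverage_id_mem {V : Type*} [AddCommGroup V] [Module ℝ V] {T : V → V} {s : Set V}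
    (hs : Convex ℝ s) (hT : Set.MapsTo T s s) {x : V} (hx : x ∈ s) {n : ℕ} (hn : n ≠ 0) :
    birkhoffAverage ℝ T id n x ∈ s := by
  rw [birkhoffAverage, birkhoffSum, Finset.smul_sum]
  refine hs.sum_mem (fun _ _ => by positivity) ?_ fun k _ => hT.iterate k hx
  simp [hn]

section MarkovKakutani

variable {V : Type*} [AddCommGroup V] [Module ℝ V] [TopologicalSpace V]
  [IsTopologicalAddGroup V] [ContinuousSMul ℝ V] [T2Space V]

theorem exists_isFixedPt_of_mapsTo (T : V →L[ℝ] V) {s : Set V} (hs : IsCompact s)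
    (hconv : Convex ℝ s) (hne : s.Nonempty) (hT : Set.MapsTo T s s) :
    ∃ x ∈ s, T x = x := by
  obtain ⟨x, hx⟩ := hne
  let avg : ℕ → V := fun n => birkhoffAverage ℝ T id (n + 1) x
  obtain ⟨y, hy, hlim⟩ := hs.ultrafilter_le_nhds ((hyperfilter ℕ).map avg)
    (le_principal_iff.2 <| mem_map.2 <|
      univ_mem' fun n => birkhoffAverage_id_mem hconv hT hx n.succ_ne_zero)
  have htendsto : Tendsto avg (hyperfilter ℕ) (𝓝 y) := hlim
  refine ⟨y, hy, sub_eq_zero.1 <| tendsto_nhds_unique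
    (((T.continuous.tendsto y).comp htendsto).sub htendsto) ?_⟩
  have hdefect : (fun n => (T ∘ avg) n - avg n) =
      fun n : ℕ => ((n + 1 : ℕ) : ℝ)⁻¹ • (T^[n + 1] x - x) := by
    funext n
    have hshift : T (avg n) = birkhoffAverage ℝ T id (n + 1) (T x) := by
      simp only [avg, birkhoffAverage, birkhoffSum, map_smul, map_sum, id,
        ← Function.iterate_succ_apply, Function.iterate_succ_apply']
    rw [Function.comp_apply, hshift]
    exact birkhoffAverage_apply_sub_birkhoffAverage (R := ℝ) T id (n + 1) x
  rw [hdefect]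
  have hbdd : Bornology.IsVonNBounded ℝ (s - s) := (hs.isVonNBounded ℝ).sub (hs.isVonNBounded ℝ)
  refine Tendsto.mono_left ?_ Nat.hyperfilter_le_atTop
  refine hbdd.smul_tendsto_zero (Eventually.of_forall fun n =>
    Set.sub_mem_sub (hT.iterate _ hx) hx) ?_
  exact (tendsto_inv_atTop_zero.comp tendsto_natCast_atTop_atTop).comp (tendsto_add_atTop_nat 1)

/-- The Markov–Kakutani fixed point theorem. -/
theorem exists_forall_isFixedPt_of_pairwise_commute {ι : Type*} {T : ι → V →L[ℝ] V}
    (hcomm : ∀ i j, Commute (T i) (T j)) {s : Set V} (hs : IsCompact s)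
    (hconv : Convex ℝ s) (hne : s.Nonempty) (hT : ∀ i, Set.MapsTo (T i) s s) :
    ∃ x ∈ s, ∀ i, T i x = x := by
  let Fix : ι → Set V := fun i => {x | T i x = x}
  have hclosed (i : ι) : IsClosed (Fix i) := isClosed_eq (T i).continuous continuous_id
  have hfixconv (i : ι) : Convex ℝ (Fix i) := by
    intro x hx y hy a b _ _ _
    simp only [Fix, Set.mem_ofPred_eq] at hx hy ⊢
    simp [hx, hy]
  have hfinite (u : Finset ι) : (s ∩ ⋂ i ∈ u, Fix i).Nonempty := by
    induction u using Finset.induction_on with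
    | empty => simpa using hne
    | insert j u _ ih =>
      obtain ⟨x, hx, hfix⟩ := exists_isFixedPt_of_mapsTo (T j)
        (hs.inter_right (isClosed_biInter fun i _ => hclosed i))
        (hconv.inter (convex_iInter₂ fun i _ => hfixconv i)) ih (by
          rintro x ⟨hxs, hx⟩
          refine ⟨hT j hxs, Set.mem_iInter₂.2 fun i hi => ?_⟩
          have hix : T i x = x := Set.mem_iInter₂.1 hx i hi
          calc T i (T j x) = T j (T i x) := congr($((hcomm i j).eq) x)
            _ = T j x := by rw [hix])
      exact ⟨x, hx.1, by simpa [Fix] using ⟨hfix, by simpa [Fix] using hx.2⟩⟩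
  obtain ⟨x, hx, hfix⟩ := hs.inter_iInter_nonempty Fix hclosed hfinite
  exact ⟨x, hx, by simpa [Fix] using hfix⟩

end MarkovKakutani

theorem exists_inner_eq_of_posSemidef {X : Type u} {M : Matrix X X ℝ} (hM : M.PosSemidef) :
    ∃ (H : Type u) (_ : NormedAddCommGroup H) (_ : InnerProductSpace ℝ H) (_ : CompleteSpace H)
      (v : X → H), ∀ x y, ⟪v x, v y⟫ = M x y := by
  let N : Matrix X X (ℝ →L[ℝ] ℝ) := M.map fun c => c • (1 : ℝ →L[ℝ] ℝ)
  have hN : N.PosSemidef := by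
    have htfae := (RKHS.posSemidef_tfae (K := N)).out 0 2
    refine htfae.2 ⟨?_, fun w => ?_⟩
    · ext x y
      have hsymm : M y x = M x y := hM.isHermitian.apply x y
      simp [N, hsymm]
    · have hform := hM.2 w
      rw [Finsupp.sum_comm] at hform
      simpa [N, mul_comm, mul_left_comm] using hform
  have := Fact.mk hN
  refine ⟨RKHS.OfKernel N, inferInstance, inferInstance, inferInstance,
    fun x => RKHS.kerFun (RKHS.OfKernel N) x 1, fun x y => ?_⟩
  rw [← RKHS.kernel_inner, RKHS.OfKernel.kernel_ofKernel]
  simpa [N] using hM.isHermitian.apply x y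

theorem isClosed_setOfPred_posSemidef {X : Type*} :
    IsClosed {M : Matrix X X ℝ | M.PosSemidef} := by
  have hset : {M : Matrix X X ℝ | M.PosSemidef} = {M | M.conjTranspose = M} ∩
      ⋂ w : X →₀ ℝ, {M | 0 ≤ w.sum fun i a => w.sum fun j b => star a * M i j * b} := by
    ext M
    simp only [Set.mem_inter_iff, Set.mem_iInter, Set.mem_ofPred_eq]
    rfl
  rw [hset]
  refine .inter (isClosed_eq (by fun_prop) continuous_id) (isClosed_iInter fun w => ?_)
  refine isClosed_le continuous_const ?_
  unfold Finsupp.sum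
  fun_prop

/-- Positive definite real functions on an abelian group: the kernel `(p, q) ↦ f (p - q)` is
symmetric and positive semidefinite. -/
def IsPositiveDefinite {A : Type*} [AddCommGroup A] (f : A → ℝ) : Prop :=
  (Matrix.of fun p q => f (p - q)).PosSemidef

namespace IsPositiveDefinite

section

variable {A B : Type*} [AddCommGroup A] [AddCommGroup B] {f : A → ℝ}

theorem comp (hf : IsPositiveDefinite f) (φ : B →+ A) : IsPositiveDefinite (f ∘ φ) := by
  simpa [IsPositiveDefinite, Matrix.submatrix, Function.comp_def] using
    Matrix.PosSemidef.submatrix hf φ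

theorem apply_zero_nonneg (hf : IsPositiveDefinite f) : 0 ≤ f 0 := by
  simpa using Matrix.PosSemidef.diag_nonneg hf (i := 0)

theorem isClosed_setOfPred : IsClosed {f : A → ℝ | IsPositiveDefinite f} :=
  isClosed_setOfPred_posSemidef.preimage (f := fun f : A → ℝ => Matrix.of fun p q => f (p - q)) <|
    continuous_pi fun _ => continuous_pi fun _ => continuous_apply _

theorem convex_setOfPred : Convex ℝ {f : A → ℝ | IsPositiveDefinite f} := by
  intro f hf g hg a b ha hb _
  exact (Matrix.PosSemidef.smul hf ha).add (Matrix.PosSemidef.smul hg hb)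

end

theorem exists_inner_eq {A : Type u} [AddCommGroup A] {f : A → ℝ} (hf : IsPositiveDefinite f) :
    ∃ (H : Type u) (_ : NormedAddCommGroup H) (_ : InnerProductSpace ℝ H) (_ : CompleteSpace H)
      (v : A → H), ∀ p q, ⟪v p, v q⟫ = f (p - q) :=
  exists_inner_eq_of_posSemidef hf

theorem norm_eq_sqrt_of_inner_eq {A H : Type*} [AddCommGroup A] [NormedAddCommGroup H]
    [InnerProductSpace ℝ H] {f : A → ℝ} {v : A → H} (hv : ∀ p q, ⟪v p, v q⟫ = f (p - q)) (p : A) :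
    ‖v p‖ = √(f 0) := by
  rw [norm_eq_sqrt_real_inner, hv, sub_self]

theorem abs_apply_le {A : Type*} [AddCommGroup A] {f : A → ℝ} (hf : IsPositiveDefinite f) (d : A) :
    |f d| ≤ f 0 := by
  obtain ⟨H, _, _, _, v, hv⟩ := hf.exists_inner_eq
  calc |f d| = |⟪v d, v 0⟫| := by rw [hv, sub_zero]
    _ ≤ ‖v d‖ * ‖v 0‖ := abs_real_inner_le_norm _ _
    _ = f 0 := by rw [norm_eq_sqrt_of_inner_eq hv, norm_eq_sqrt_of_inner_eq hv,
        Real.mul_self_sqrt hf.apply_zero_nonneg]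

end IsPositiveDefinite

section WeakLimits

variable {H : Type*} [NormedAddCommGroup H] [InnerProductSpace ℝ H]

theorem eq_of_inner_eq_inner_self {e e' : H} (h : ⟪e, e'⟫ = ⟪e, e⟫) (h' : ⟪e, e'⟫ = ⟪e', e'⟫) :
    e = e' := by
  rw [← sub_eq_zero, ← inner_self_eq_zero (𝕜 := ℝ), real_inner_sub_sub_self, ← h, ← h']
  ring

theorem inner_eq_of_tendsto_inner {ι κ : Type*} {x : ι → H} {y : κ → H} {l : Filter ι}
    {l' : Filter κ} [l.NeBot] [l'.NeBot] {e e' : H} {m : ℝ}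
    (he : ∀ w, Tendsto (fun i => ⟪x i, w⟫) l (𝓝 ⟪e, w⟫))
    (he' : ∀ w, Tendsto (fun j => ⟪y j, w⟫) l' (𝓝 ⟪e', w⟫))
    (hxy : ∀ j, Tendsto (fun i => ⟪x i, y j⟫) l (𝓝 m)) : ⟪e, e'⟫ = m := by
  have hey (j : κ) : ⟪e, y j⟫ = m := tendsto_nhds_unique (he (y j)) (hxy j)
  have hlim := he' e
  simp only [real_inner_comm e, hey] at hlim
  exact tendsto_nhds_unique hlim tendsto_const_nhds

variable [CompleteSpace H] {ι : Type*} {x : ι → H} {C : ℝ}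

theorem exists_tendsto_ultrafilter_inner (U : Ultrafilter ι) (hx : ∀ i, ‖x i‖ ≤ C) :
    ∃ e : H, ∀ y, Tendsto (fun i => ⟪x i, y⟫) U (𝓝 ⟪e, y⟫) := by
  let φ : ι → WeakDual ℝ H := fun i => (InnerProductSpace.toDual ℝ H (x i)).toWeakDual
  obtain ⟨ℓ, _, hℓ⟩ := (WeakDual.isCompact_closedBall (𝕜 := ℝ) (E := H) 0 C).ultrafilter_le_nhds
    (U.map φ) (le_principal_iff.2 <| mem_map.2 <| univ_mem' fun i => by simpa [φ] using hx i)
  have hlim : Tendsto φ U (𝓝 ℓ) := hℓ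
  refine ⟨(InnerProductSpace.toDual ℝ H).symm ℓ.toStrongDual, fun y => ?_⟩
  rw [InnerProductSpace.toDual_symm_apply]
  exact ((WeakDual.eval_continuous y).tendsto ℓ).comp hlim

theorem exists_tendsto_inner_of_tendsto_gram {l : Filter ι} [l.NeBot] {m : ℝ}
    (hx : ∀ i, ‖x i‖ ≤ C) (hgram : ∀ j, Tendsto (fun i => ⟪x i, x j⟫) l (𝓝 m)) :
    ∃ e : H, ⟪e, e⟫ = m ∧ ∀ y, Tendsto (fun i => ⟪x i, y⟫) l (𝓝 ⟪e, y⟫) := by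
  have hgram' {U : Ultrafilter ι} (hU : ↑U ≤ l) (j : ι) : Tendsto (fun i => ⟪x i, x j⟫) U (𝓝 m) :=
    (hgram j).mono_left hU
  have hof : ↑(Ultrafilter.of l) ≤ l := Ultrafilter.of_le l
  obtain ⟨e, he⟩ := exists_tendsto_ultrafilter_inner (.of l) hx
  have hee : ⟪e, e⟫ = m := inner_eq_of_tendsto_inner he he (hgram' hof)
  refine ⟨e, hee, fun y => (tendsto_iff_ultrafilter _ _ _).2 fun U hU => ?_⟩
  obtain ⟨e', he'⟩ := exists_tendsto_ultrafilter_inner U hx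
  have hee' : ⟪e', e⟫ = m := inner_eq_of_tendsto_inner he' he (hgram' hU)
  have he'e' : ⟪e', e'⟫ = m := inner_eq_of_tendsto_inner he' he' (hgram' hU)
  rw [← eq_of_inner_eq_inner_self (hee'.trans he'e'.symm) (hee'.trans hee.symm)]
  exact he' y

end WeakLimits

section QuadraticFibres

variable {K : Type*} [Field K]

theorem finite_setOfPred_quadratic_eq_zero {a b c : K} (h : a ≠ 0 ∨ c ≠ 0) :
    {x : K | a * x ^ 2 + b * x + c = 0}.Finite := by
  let P : Polynomial K := .C a * .X ^ 2 + .C b * .X + .C c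
  have hP : P ≠ 0 := by
    rintro hP
    rcases h with h | h
    · exact h (by simpa [P] using congr($(hP).coeff 2))
    · exact h (by simpa [P] using congr($(hP).coeff 0))
  simpa [P, Polynomial.IsRoot] using Polynomial.finite_setOfPred_isRoot hP

theorem tendsto_mul_diagonal_sub_cofinite (p : K × K) :
    Tendsto (fun u : K => (u - p.1) * (u - p.2)) cofinite cofinite := by
  refine .cofinite_of_finite_preimage_singleton fun c => ?_
  refine (finite_setOfPred_quadratic_eq_zero (a := 1) (b := -(p.1 + p.2)) (c := p.1 * p.2 - c)
    (.inl one_ne_zero)).subset fun u hu => ?_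
  simp only [Set.mem_preimage, Set.mem_singleton_iff, Set.mem_ofPred_eq] at hu ⊢
  linear_combination hu

theorem tendsto_mul_hyperbola_sub_cofinite {z : K} (hz : z ≠ 0) {p : K × K} (hp : p ≠ 0) :
    Tendsto (fun u : Kˣ => (u - p.1) * (z * (u⁻¹ : Kˣ) - p.2)) cofinite cofinite := by
  refine .cofinite_of_finite_preimage_singleton fun c => ?_
  have hne : -p.2 ≠ 0 ∨ -(p.1 * z) ≠ 0 := by
    by_contra! h
    exact hp (Prod.ext (by simpa [hz] using h.2) (by simpa using h.1))
  refine ((finite_setOfPred_quadratic_eq_zero (b := z + p.1 * p.2 - c) hne).preimage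
    Units.val_injective.injOn).subset fun u hu => ?_
  simp only [Set.mem_preimage, Set.mem_singleton_iff, Set.mem_ofPred_eq] at hu ⊢
  have huinv := u.mul_inv
  linear_combination (u : K) * hu + (p.1 * z - z * u) * huinv

end QuadraticFibres

section HyperbolicRotation

variable {K : Type*} [Field K]

/-- The automorphism `(a, b) ↦ (t a, t⁻¹ b)` of the additive group `K × K`, which preserves the
quadratic form `a b`. -/
def hyperbolicRotation (t : Kˣ) : K × K →+ K × K :=
  (AddMonoidHom.mulLeft (t : K)).prodMap (AddMonoidHom.mulLeft (t⁻¹ : K))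

@[simp]
theorem hyperbolicRotation_apply (t : Kˣ) (d : K × K) :
    hyperbolicRotation t d = (t * d.1, (t⁻¹ : K) * d.2) := rfl

theorem hyperbolicRotation_fst_mul_snd (t : Kˣ) (d : K × K) :
    (hyperbolicRotation t d).1 * (hyperbolicRotation t d).2 = d.1 * d.2 := by
  simp only [hyperbolicRotation_apply]
  field_simp

theorem hyperbolicRotation_comm (s t : Kˣ) (d : K × K) :
    hyperbolicRotation s (hyperbolicRotation t d) =
      hyperbolicRotation t (hyperbolicRotation s d) := by
  simp [mul_left_comm]

end HyperbolicRotation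

section Invariant

variable {K : Type u} [Field K] {f : K × K → ℝ}

theorem apply_eq_of_mul_eq (hinv : ∀ t d, f (hyperbolicRotation t d) = f d) {d d' : K × K}
    (hd : d.1 * d.2 = d'.1 * d'.2) (hd0 : d.1 * d.2 ≠ 0) : f d = f d' := by
  have h1 : d.1 ≠ 0 := left_ne_zero_of_mul hd0
  have h1' : d'.1 ≠ 0 := left_ne_zero_of_mul (hd ▸ hd0)
  rw [← hinv (.mk0 (d'.1 / d.1) (div_ne_zero h1' h1)) d]
  congr 1
  ext
  · simp [h1]
  · simp only [hyperbolicRotation_apply, Units.val_mk0]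
    field_simp
    linear_combination hd

namespace IsPositiveDefinite

variable [Infinite K]

theorem exists_tendsto_comap_mul_cofinite (hf : IsPositiveDefinite f)
    (hinv : ∀ t d, f (hyperbolicRotation t d) = f d) :
    ∃ m, Tendsto f (comap (fun d => d.1 * d.2) cofinite) (𝓝 m) := by
  obtain ⟨H, _, _, _, v, hv⟩ := hf.exists_inner_eq
  have hnorm (p) : ‖v p‖ ≤ √(f 0) := (norm_eq_sqrt_of_inner_eq hv p).le
  have hgram (j : K) : Tendsto (fun w : K => ⟪v (w, 0), v (j, 0)⟫) cofinite (𝓝 (f (1, 0))) := by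
    refine tendsto_const_nhds.congr' ?_
    filter_upwards [(Set.finite_singleton j).compl_mem_cofinite] with w hw
    rw [hv, ← hinv (.mk0 (w - j) (sub_ne_zero.2 hw))]
    simp
  obtain ⟨e, _, he⟩ := exists_tendsto_inner_of_tendsto_gram (fun w => hnorm (w, 0)) hgram
  refine ⟨⟪e, v (0, -1)⟫, ((he _).comp tendsto_comap).congr' ?_⟩
  have : ∀ᶠ d in comap (fun d : K × K => d.1 * d.2) cofinite, d.1 * d.2 ≠ 0 :=
    tendsto_comap.eventually (Set.finite_singleton (0 : K)).compl_mem_cofinite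
  filter_upwards [this] with d hd
  rw [Function.comp_apply, hv]
  exact apply_eq_of_mul_eq hinv (by simp) (by simpa using hd)

theorem apply_nonneg_of_mul_ne_zero (hf : IsPositiveDefinite f)
    (hinv : ∀ t d, f (hyperbolicRotation t d) = f d) {d : K × K} (hd : d.1 * d.2 ≠ 0) :
    0 ≤ f d := by
  obtain ⟨m, hm⟩ := hf.exists_tendsto_comap_mul_cofinite hinv
  obtain ⟨H, _, _, _, v, hv⟩ := hf.exists_inner_eq
  have hnorm (p) : ‖v p‖ ≤ √(f 0) := (norm_eq_sqrt_of_inner_eq hv p).le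
  let diag (u : K) : K × K := (u, u)
  let hyp (u : Kˣ) : K × K := (u, d.1 * d.2 * (u⁻¹ : Kˣ))
  have hdiag (p : K × K) : Tendsto (fun u => ⟪v (diag u), v p⟫) cofinite (𝓝 m) := by
    simp only [hv]
    exact hm.comp (tendsto_comap_iff.2 (tendsto_mul_diagonal_sub_cofinite p))
  have hhyp {p : K × K} (hp : p ≠ 0) : Tendsto (fun u => ⟪v (hyp u), v p⟫) cofinite (𝓝 m) := by
    simp only [hv]
    exact hm.comp (tendsto_comap_iff.2 (tendsto_mul_hyperbola_sub_cofinite hd hp))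
  have hhyp_zero (u : Kˣ) : ⟪v (hyp u), v 0⟫ = f d := by
    rw [hv, sub_zero]
    have hmul : (hyp u).1 * (hyp u).2 = d.1 * d.2 := by
      rw [mul_left_comm, u.mul_inv, mul_one]
    exact apply_eq_of_mul_eq hinv hmul (hmul ▸ hd)
  have : Infinite Kˣ :=
    unitsEquivNeZero.infinite_iff.2 (Set.finite_singleton 0).infinite_compl.to_subtype
  obtain ⟨e, hee, he⟩ := exists_tendsto_inner_of_tendsto_gram (fun u => hnorm (diag u))
    fun u => hdiag (diag u)
  obtain ⟨e', hee', he'⟩ := exists_tendsto_inner_of_tendsto_gram (fun u => hnorm (hyp u))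
    fun u => hhyp (by simp [hyp])
  have hcross : ⟪e, e'⟫ = m := inner_eq_of_tendsto_inner he he' fun u => hdiag (hyp u)
  have heq : e = e' := eq_of_inner_eq_inner_self (hcross.trans hee.symm) (hcross.trans hee'.symm)
  have he'_zero : ⟪e', v 0⟫ = f d :=
    tendsto_nhds_unique (he' (v 0)) (by simp only [hhyp_zero, tendsto_const_nhds])
  have he_zero : ⟪e, v 0⟫ = m := tendsto_nhds_unique (he (v 0)) (hdiag 0)
  rw [← he'_zero, ← heq, he_zero, ← hee]
  exact real_inner_self_nonneg

end IsPositiveDefinite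

end Invariant

namespace IsPositiveDefinite

theorem isCompact_setOfPred_apply_zero_le {A : Type*} [AddCommGroup A] (M : ℝ) :
    IsCompact {g : A → ℝ | IsPositiveDefinite g ∧ g 0 ≤ M} := by
  refine (isCompact_univ_pi fun _ => isCompact_Icc (a := -M) (b := M)).of_isClosed_subset
    (isClosed_setOfPred.inter (isClosed_le (continuous_apply 0) continuous_const)) ?_
  rintro g ⟨hg, hgM⟩ d -
  exact abs_le.1 ((hg.abs_apply_le d).trans hgM)

theorem exists_invariant {A ι : Type*} [AddCommGroup A] {φ : ι → A →+ A}
    (hcomm : ∀ i j d, φ i (φ j d) = φ j (φ i d)) {f : A → ℝ} (hf : IsPositiveDefinite f)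
    {s : Set (A → ℝ)} (hs : IsClosed s) (hconv : Convex ℝ s) (hfs : f ∈ s)
    (hmaps : ∀ i, ∀ g ∈ s, g ∘ φ i ∈ s) :
    ∃ g ∈ s, IsPositiveDefinite g ∧ ∀ i d, g (φ i d) = g d := by
  have hset : Convex ℝ ({g | IsPositiveDefinite g ∧ g 0 ≤ f 0} ∩ s) :=
    (convex_setOfPred.inter <| (convex_Iic (f 0)).is_linear_preimage
      (LinearMap.proj (R := ℝ) (0 : A)).isLinear).inter hconv
  obtain ⟨g, ⟨⟨hg, -⟩, hgs⟩, hinv⟩ := exists_forall_isFixedPt_of_pairwise_commute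
    (T := fun i => Pi.compRightL ℝ (fun _ => ℝ) (φ i))
    (fun i j => by ext g d; exact congrArg g (hcomm j i d))
    ((isCompact_setOfPred_apply_zero_le (f 0)).inter_right hs) hset ⟨f, ⟨hf, le_rfl⟩, hfs⟩
    fun i g ⟨⟨hg, hg0⟩, hgs⟩ => ⟨⟨hg.comp (φ i), by simpa using hg0⟩, hmaps i g hgs⟩
  exact ⟨g, hgs, hg, fun i d => congrFun (hinv i) d⟩

theorem nonneg_of_forall_mul_eq_le {K : Type*} [Field K] [Infinite K] {f : K × K → ℝ}
    (hf : IsPositiveDefinite f) {z : K} {c : ℝ} (hc : ∀ d : K × K, d.1 * d.2 = z → f d ≤ c) :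
    0 ≤ c := by
  rcases eq_or_ne z 0 with rfl | hz
  · exact hf.apply_zero_nonneg.trans (hc 0 (by simp))
  have hclosed : IsClosed {g : K × K → ℝ | ∀ d, d.1 * d.2 = z → g d ≤ c} := by
    simp only [Set.ofPred_forall]
    exact isClosed_iInter fun d => isClosed_iInter fun _ =>
      isClosed_le (continuous_apply d) continuous_const
  have hconv : Convex ℝ {g : K × K → ℝ | ∀ d, d.1 * d.2 = z → g d ≤ c} :=
    fun g hg g' hg' a b ha hb hab d hd => convex_Iic c (hg d hd) (hg' d hd) ha hb hab
  obtain ⟨g, hgc, hg, hinv⟩ := hf.exists_invariant hyperbolicRotation_comm hclosed hconv hc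
    fun t g hg d hd => hg _ (by rw [hyperbolicRotation_fst_mul_snd, hd])
  have hnonneg := hg.apply_nonneg_of_mul_ne_zero hinv (d := (1, z)) (by simpa using hz)
  exact hnonneg.trans (hgc (1, z) (one_mul z))

end IsPositiveDefinite

theorem exists_tendsto_ultrafilter_of_abs_le {ι : Type*} (U : Ultrafilter ι) {r : ι → ℝ}
    {C : ℝ} (hr : ∀ i, |r i| ≤ C) : ∃ y, Tendsto r U (𝓝 y) := by
  obtain ⟨y, -, hy⟩ := (isCompact_Icc (a := -C) (b := C)).ultrafilter_le_nhds (U.map r)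
    (le_principal_iff.2 <| mem_map.2 <| univ_mem' fun i => abs_le.1 (hr i))
  exact ⟨y, hy⟩

theorem exists_ultrafilter_tendsto_limsup {r : ℕ → ℝ} {C : ℝ} (hr : ∀ n, |r n| ≤ C) :
    ∃ U : Ultrafilter ℕ, ↑U ≤ (atTop : Filter ℕ) ∧ Tendsto r U (𝓝 (limsup r atTop)) := by
  have hle : IsBoundedUnder (· ≤ ·) atTop r := isBoundedUnder_of ⟨C, fun n => (abs_le.1 (hr n)).2⟩
  have hge : IsBoundedUnder (· ≥ ·) atTop r := isBoundedUnder_of ⟨-C, fun n => (abs_le.1 (hr n)).1⟩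
  exact mapClusterPt_iff_ultrafilter.1 (MapClusterPt.limsup hge.isCoboundedUnder_le hle)

theorem posSemidef_of_mul {X : Type*} (u : X → ℝ) :
    (Matrix.of fun p q => u p * u q).PosSemidef := by
  refine ⟨Matrix.IsHermitian.ext fun p q => mul_comm _ _, fun w => ?_⟩
  have hsq : (w.sum fun p a => w.sum fun q b => star a * (u p * u q) * b) =
      (w.sum fun p a => a * u p) ^ 2 := by
    simp only [Finsupp.sum, sq, Finset.sum_mul_sum, star_trivial]
    exact Finset.sum_congr rfl fun p _ => Finset.sum_congr rfl fun q _ => by ring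
  exact (sq_nonneg _).trans_eq hsq.symm

theorem posSemidef_expect_mul {X Ω : Type*} (s : Finset Ω) (u : Ω → X → ℝ) :
    (Matrix.of fun p q => 𝔼 x ∈ s, u x p * u x q).PosSemidef := by
  have hsum : (Matrix.of fun p q => 𝔼 x ∈ s, u x p * u x q) =
      (s.card : ℝ)⁻¹ • ∑ x ∈ s, Matrix.of fun p q => u x p * u x q := by
    ext p q
    simp [Matrix.sum_apply, Finset.expect_eq_sum_div_card, div_eq_inv_mul]
  rw [hsum]
  exact (Matrix.posSemidef_sum s fun x _ => posSemidef_of_mul (u x)).smul (by positivity)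

section Averages

variable {A : Type*} {g : A → ℝ} {C : ℝ}

theorem abs_sum_sub_sum_le_of_card_eq (hg : ∀ x, |g x| ≤ C) {s t : Finset A}
    (hst : s.card = t.card) :
    |∑ x ∈ s, g x - ∑ x ∈ t, g x| ≤ 2 * C * (s.card - (s ∩ t).card) := by
  have hsum (u : Finset A) : |∑ x ∈ u, g x| ≤ u.card * C := by
    simpa using (Finset.abs_sum_le_sum_abs g u).trans
      (Finset.sum_le_card_nsmul u _ C fun x _ => hg x)
  have hs : ((s ∩ t).card : ℝ) + (s \ t).card = s.card :=
    mod_cast Finset.card_inter_add_card_sdiff s t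
  have ht : ((s ∩ t).card : ℝ) + (t \ s).card = t.card := by
    rw [Finset.inter_comm]
    exact mod_cast Finset.card_inter_add_card_sdiff t s
  have hst' : (s.card : ℝ) = t.card := mod_cast hst
  calc |∑ x ∈ s, g x - ∑ x ∈ t, g x| = |∑ x ∈ s \ t, g x - ∑ x ∈ t \ s, g x| := by
        rw [Finset.sum_sdiff_sub_sum_sdiff]
    _ ≤ (s \ t).card * C + (t \ s).card * C := (abs_sub _ _).trans (add_le_add (hsum _) (hsum _))
    _ = 2 * C * (s.card - (s ∩ t).card) := by
      linear_combination C * hs + C * ht - C * hst'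

theorem expect_indicator_one (s : Finset A) (E : Set A) :
    𝔼 x ∈ s, E.indicator (1 : A → ℝ) x = ((s.filter (· ∈ E)).card : ℝ) / s.card := by
  simp [Finset.expect_eq_sum_div_card, Set.indicator_apply]

theorem abs_indicator_one_le (E : Set A) (x : A) : |E.indicator (1 : A → ℝ) x| ≤ 1 := by
  by_cases hx : x ∈ E <;> simp [hx]

variable [AddCommGroup A]

theorem IsAddFolner.tendsto_expect_add_sub_expect {F : ℕ → Finset A} (hF : IsAddFolner F)
    (hg : ∀ x, |g x| ≤ C) (a : A) :
    Tendsto (fun n => 𝔼 x ∈ F n, g (x + a) - 𝔼 x ∈ F n, g x) atTop (𝓝 0) := by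
  have hlim : Tendsto (fun n => 2 * C * (1 - ((F n ∩ (F n).image (· + a)).card : ℝ) / (F n).card))
      atTop (𝓝 0) := by
    simpa using ((hF.2 a).const_sub 1).const_mul (2 * C)
  refine squeeze_zero_norm (fun n => ?_) hlim
  have hcard : (0 : ℝ) < (F n).card := mod_cast (hF.1 n).card_pos
  have hshift : ∑ x ∈ F n, g (x + a) = ∑ x ∈ (F n).image (· + a), g x :=
    (Finset.sum_image (add_left_injective a).injOn).symm
  have hbound := abs_sum_sub_sum_le_of_card_eq hg
    (Finset.card_image_of_injective (F n) (add_left_injective a)).symm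
  rw [Finset.expect_eq_sum_div_card, Finset.expect_eq_sum_div_card, hshift, ← sub_div,
    Real.norm_eq_abs, abs_div, abs_of_pos hcard, div_le_iff₀ hcard, abs_sub_comm]
  refine hbound.trans_eq ?_
  field_simp

theorem IsAddFolner.exists_autocorrelation {F : ℕ → Finset A} (hF : IsAddFolner F)
    (hg : ∀ x, |g x| ≤ C) {U : Ultrafilter ℕ} (hU : ↑U ≤ (atTop : Filter ℕ)) :
    ∃ ψ : A → ℝ, IsPositiveDefinite ψ ∧
      ∀ d, Tendsto (fun n => 𝔼 x ∈ F n, g (x + d) * g x) U (𝓝 (ψ d)) := by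
  have hmul (x y : A) : |g x * g y| ≤ C * C := by
    rw [abs_mul]
    exact mul_le_mul (hg x) (hg y) (abs_nonneg _) ((abs_nonneg _).trans (hg x))
  have hcorr (d : A) (n : ℕ) : |𝔼 x ∈ F n, g (x + d) * g x| ≤ C * C :=
    (Finset.abs_expect_le _ _).trans (Finset.expect_le (hF.1 n) fun x _ => hmul _ _)
  choose ψ hψ using fun d => exists_tendsto_ultrafilter_of_abs_le U (hcorr d)
  have hpair (p q : A) :
      Tendsto (fun n => 𝔼 x ∈ F n, g (x + p) * g (x + q)) U (𝓝 (ψ (p - q))) := by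
    have hshift := (hF.tendsto_expect_add_sub_expect (fun x => hmul (x + (p - q)) x) q).mono_left hU
    simpa [add_right_comm, add_assoc] using hshift.add (hψ (p - q))
  exact ⟨ψ, isClosed_setOfPred_posSemidef.mem_of_tendsto
    (tendsto_pi_nhds.2 fun p => tendsto_pi_nhds.2 fun q => hpair p q)
    (Eventually.of_forall fun n => posSemidef_expect_mul (F n) fun x p => g (x + p)), hψ⟩

theorem indicator_one_mul_eq_zero_of_notMem_sub {E : Set A} {d : A} (hd : d ∉ E - E) (x : A) :
    E.indicator (1 : A → ℝ) (x + d) * E.indicator 1 x = 0 := by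
  by_cases hx : x ∈ E
  · have hxd : x + d ∉ E := fun h => hd ⟨x + d, h, x, hx, add_sub_cancel_left x d⟩
    simp [hxd]
  · simp [hx]

theorem IsAddFolner.exists_isPositiveDefinite_eq_neg_sq {F : ℕ → Finset A} (hF : IsAddFolner F)
    {U : Ultrafilter ℕ} (hU : ↑U ≤ (atTop : Filter ℕ)) {E : Set A} {δ : ℝ}
    (hδ : Tendsto (fun n => 𝔼 x ∈ F n, E.indicator (1 : A → ℝ) x) U (𝓝 δ)) :
    ∃ ψ : A → ℝ, IsPositiveDefinite ψ ∧ ∀ d ∉ E - E, ψ d = -δ ^ 2 := by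
  set ind : A → ℝ := E.indicator 1
  have hind : ∀ x, |ind x| ≤ 1 := abs_indicator_one_le E
  obtain ⟨ψ, hψ, hlim⟩ := hF.exists_autocorrelation (g := fun x => ind x - δ)
    (fun x => (abs_sub _ _).trans (add_le_add_left (hind x) |δ|)) hU
  refine ⟨ψ, hψ, fun d hd => tendsto_nhds_unique (hlim d) ?_⟩
  have hexpand (n : ℕ) : 𝔼 x ∈ F n, (ind (x + d) - δ) * (ind x - δ) =
      -δ * (𝔼 x ∈ F n, ind (x + d) - 𝔼 x ∈ F n, ind x) - 2 * δ * 𝔼 x ∈ F n, ind x + δ ^ 2 := by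
    have hpoint (x : A) : (ind (x + d) - δ) * (ind x - δ) =
        -δ * (ind (x + d) - ind x) - 2 * δ * ind x + δ ^ 2 := by
      linear_combination indicator_one_mul_eq_zero_of_notMem_sub hd x
    simp only [hpoint, Finset.expect_add_distrib, Finset.expect_sub_distrib, ← Finset.mul_expect,
      Finset.expect_const (hF.1 n)]
  have hshift := (hF.tendsto_expect_add_sub_expect hind d).mono_left hU
  simp only [hexpand]
  convert ((hshift.const_mul (-δ)).sub (hδ.const_mul (2 * δ))).add_const (δ ^ 2) using 2
  ring

theorem PosUpperBanachDensity.exists_isPositiveDefinite {E : Set A}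
    (hE : PosUpperBanachDensity E) :
    ∃ c < 0, ∃ ψ : A → ℝ, IsPositiveDefinite ψ ∧ ∀ d ∉ E - E, ψ d = c := by
  obtain ⟨F, hF, hpos⟩ := hE
  simp only [← expect_indicator_one] at hpos
  obtain ⟨U, hU, hδ⟩ := exists_ultrafilter_tendsto_limsup fun n =>
    (Finset.abs_expect_le _ _).trans (Finset.expect_le (hF.1 n) fun x _ => abs_indicator_one_le E x)
  exact ⟨_, neg_lt_zero.2 (pow_pos hpos 2), hF.exists_isPositiveDefinite_eq_neg_sq hU hδ⟩

end Averages

/-- The additive map `(a, b) ↦ ((a + b) / 2, (a - b) / 2)`, which carries the form `a b` to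
`x ^ 2 - y ^ 2`. -/
def halfSumHalfDiff (K : Type*) [Field K] : K × K →+ K × K where
  toFun d := ((d.1 + d.2) / 2, (d.1 - d.2) / 2)
  map_zero' := by simp
  map_add' d d' := by ext <;> dsimp <;> ring

theorem halfSumHalfDiff_sq_sub_sq {K : Type*} [Field K] (h2 : (2 : K) ≠ 0) (d : K × K) :
    (halfSumHalfDiff K d).1 ^ 2 - (halfSumHalfDiff K d).2 ^ 2 = d.1 * d.2 := by
  simp only [halfSumHalfDiff, AddMonoidHom.coe_mk, ZeroHom.coe_mk]
  field_simp
  ring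

/-- Density strengthening of Davies' theorem over any countably infinite field of
characteristic `≠ 2`: any set `E ⊆ K²` of positive upper Banach density realizes every
`z ∈ K` as `(x₁ − y₁)² − (x₂ − y₂)²` with `(x₁,x₂), (y₁,y₂) ∈ E`. -/
theorem statement12
    {K : Type*} [Field K] [Countable K] [Infinite K] (hchar : ringChar K ≠ 2)
    (E : Set (K × K)) (hE : PosUpperBanachDensity E) :
    ∀ z : K, ∃ p ∈ E, ∃ q ∈ E, (p.1 - q.1) ^ 2 - (p.2 - q.2) ^ 2 = z := by
  intro z
  by_contra! hz
  obtain ⟨c, hc, ψ, hψ, hψE⟩ := hE.exists_isPositiveDefinite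
  refine hc.not_ge <| (hψ.comp (halfSumHalfDiff K)).nonneg_of_forall_mul_eq_le (z := z)
    fun d hd => (hψE _ ?_).le
  rintro ⟨p, hp, q, hq, hpq⟩
  apply hz p hp q hq
  rw [← hd, ← halfSumHalfDiff_sq_sub_sq (Ring.two_ne_zero hchar), ← hpq]
  rfl
end
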